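/- arXiv:1407.6838 — 2 statements merged into one kernel-verified Lean document; each statement's English description precedes it below -/
import Mathlib

section
/- Let V = ℂⁿ with d ≥ 3 and let f ∈ ℂ[x₁,…,x_n] be homogeneous of degree d with nonvanishing discriminant (equivalently, with an isolated critical point at 0). Then for any g ∈ GLₙ(ℂ), the associated form satisfies A(g·f) = (det g)² · (g·A(f)), where (g·f)(x) = f(x·g^{-t}) and (g·F)(y) = F(y·g). -/
open MvPolynomial Matrix

noncomputable def hess {n : ℕ} (f : MvPolynomial (Fin n) ℂ) : MvPolynomial (Fin n) ℂ :=
  (Matrix.of fun i j : Fin n => pderiv i (pderiv j f)).det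

noncomputable def jacDet {n : ℕ} (f : Fin n → MvPolynomial (Fin n) ℂ) : MvPolynomial (Fin n) ℂ :=
  (Matrix.of fun i j : Fin n => pderiv j (f i)).det

/-- The Jacobian ideal of `f`, generated by its first-order partial derivatives. -/
noncomputable def jacIdeal {n : ℕ} (f : MvPolynomial (Fin n) ℂ) : Ideal (MvPolynomial (Fin n) ℂ) :=
  Ideal.span (Set.range fun i => pderiv i f)

/-- `Af` is the associated form of a nondegenerate form `f` of degree `d` in `n` variables:
it is homogeneous of degree `n*(d-2)` and satisfies the defining identity
`(y₁x̄₁ + ⋯ + yₙx̄ₙ)^(n(d-2)) = Af(y) ⬝ hess(f)‾` in the Milnor algebra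
`M(f) = ℂ[x]/(f_{x₁},…,f_{xₙ})`, for every `y ∈ ℂⁿ`. -/
def IsAssociatedForm (n d : ℕ) (f Af : MvPolynomial (Fin n) ℂ) : Prop :=
  Af.IsHomogeneous (n * (d - 2)) ∧ ∀ y : Fin n → ℂ,
    Ideal.Quotient.mk (jacIdeal f) ((∑ i, C (y i) * X i) ^ (n * (d - 2)))
      = Ideal.Quotient.mk (jacIdeal f) (C (eval y Af) * hess f)

/-- `Af` is the associated form of the `n`-tuple `f` of forms of degree `d-1`:
it is homogeneous of degree `n*(d-2)` and satisfies
`(y₁x̄₁ + ⋯ + yₙx̄ₙ)^(n(d-2)) = Af(y) ⬝ jac(f)‾` in `M(f) = ℂ[x]/(f₁,…,fₙ)`. -/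
def IsAssociatedFormT (n d : ℕ) (f : Fin n → MvPolynomial (Fin n) ℂ)
    (Af : MvPolynomial (Fin n) ℂ) : Prop :=
  Af.IsHomogeneous (n * (d - 2)) ∧ ∀ y : Fin n → ℂ,
    Ideal.Quotient.mk (Ideal.span (Set.range f)) ((∑ i, C (y i) * X i) ^ (n * (d - 2)))
      = Ideal.Quotient.mk (Ideal.span (Set.range f)) (C (eval y Af) * jacDet f)

/-- Substitution of a linear change of variables: `(substM M f)(x) = f(M ⬝ x)`. -/
noncomputable def substM {n : ℕ} (M : Matrix (Fin n) (Fin n) ℂ) (f : MvPolynomial (Fin n) ℂ) :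
    MvPolynomial (Fin n) ℂ :=
  aeval (fun i => ∑ j, C (M i j) * X j) f

/-!
If `A` is the associated form of `f`, then substituting `g⁻¹` into its defining identity at `gᵀy`
shows that `(det g)² A(gᵀy)` is an associated form of `f ∘ g⁻¹`, the Hessian being a covariant of
weight two. Associated forms are unique as soon as `hess f ∉ J(f)`. Otherwise all powers of linear
forms of degree `N = n(d - 2)`, hence all forms of degree `N`, would lie in `J(f)`; but `n` forms
`f₁, …, fₙ` of degree `e` in `n` variables never generate all forms of degree `n(e - 1)`, and
`N = n(e - 1)` for the degree `e = d - 1` of the partial derivatives.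

For this last fact, write exponents as `m = e q + r` with `0 ≤ rᵢ < e`. The products `x^r F^q` with
`F = (xᵢᵉ)` are the monomials, so they span. In the pencil `F = (1 - T) xᵢᵉ + T fᵢ` over `K(T)`, the
products `x^r F^q` span because they do at `T = 0`, and if `(f₁, …, fₙ)` contains all forms of
degree `n(e - 1)`, then so does `(F₁, …, Fₙ)`, by looking at `T = 1`. But the part of degree
`n(e - 1)` of `(F₁, …, Fₙ)` is spanned by the `x^r F^q` with `q ≠ 0`, which leaves out
`m = (e - 1, …, e - 1)` and so is too small.
-/

variable {σ : Type*}

-- A minor of `v` that is nonzero after `φ` is nonzero over `R`, hence nonzero after `ψ`.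
theorem span_comp_eq_top_of_injective {ι κ R K L : Type*} [Finite κ] [CommRing R] [Field K]
    [Field L] (φ : R →+* K) {ψ : R →+* L} (hψ : Function.Injective ψ) {v : ι → κ → R}
    (h : Submodule.span K (Set.range fun i => φ ∘ v i) = ⊤) :
    Submodule.span L (Set.range fun i => ψ ∘ v i) = ⊤ := by
  classical
  cases nonempty_fintype κ
  obtain ⟨κ', s, -, hs, hli⟩ := exists_linearIndependent' K fun i => φ ∘ v i
  let e : κ ≃ κ' := (Pi.basisFun K κ).indexEquiv (.mk hli (by rw [hs, h]))
  let A : Matrix κ κ R := of fun r => v (s (e r))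
  have hφA : IsUnit (A.map φ) := linearIndependent_rows_iff_isUnit.1 (hli.comp e e.injective)
  have hdet : A.det ≠ 0 := fun h₀ => by
    rw [isUnit_iff_isUnit_det, ← RingHom.mapMatrix_apply, ← RingHom.map_det, h₀, map_zero] at hφA
    exact not_isUnit_zero hφA
  have hψA : IsUnit (A.map ψ) := by
    rw [isUnit_iff_isUnit_det, ← RingHom.mapMatrix_apply, ← RingHom.map_det]
    exact ((map_ne_zero_iff ψ hψ).2 hdet).isUnit
  have hrows := (linearIndependent_rows_iff_isUnit.2 hψA).span_eq_top_of_card_eq_finrank' (by simp)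
  refine top_unique (hrows.ge.trans (Submodule.span_mono ?_))
  rintro _ ⟨r, rfl⟩
  exact ⟨s (e r), rfl⟩

theorem homogeneousSubmodule_eq_span_monomial (R : Type*) [CommSemiring R] (k : ℕ) :
    homogeneousSubmodule σ R k =
      Submodule.span R ((fun m => monomial m 1) '' {m : σ →₀ ℕ | m.degree = k}) := by
  rw [homogeneousSubmodule_eq_finsupp_supported]
  exact AddMonoidAlgebra.supported_eq_span_single _ _

theorem homogeneousSubmodule_le_span_range_iff {ι R : Type*} [CommSemiring R] [Finite σ] {k : ℕ}
    {v : ι → MvPolynomial σ R} (hv : ∀ i, (v i).IsHomogeneous k) :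
    homogeneousSubmodule σ R k ≤ Submodule.span R (Set.range v) ↔
      Submodule.span R
        (Set.range fun i (m : {m : σ →₀ ℕ // m.degree = k}) => coeff m.1 (v i)) = ⊤ := by
  classical
  let c : MvPolynomial σ R →ₗ[R] {m : σ →₀ ℕ // m.degree = k} → R :=
    LinearMap.pi fun m => lcoeff R m.1
  have hc : Submodule.span R (Set.range fun i m => coeff m.1 (v i)) =
      (Submodule.span R (Set.range v)).map c := by
    rw [Submodule.map_span, ← Set.range_comp]
    rfl
  have hle : Submodule.span R (Set.range v) ≤ homogeneousSubmodule σ R k :=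
    Submodule.span_le.2 (Set.range_subset_iff.2 hv)
  rw [hc]
  constructor
  · intro h
    rw [hle.antisymm h, eq_top_iff]
    intro w _
    have : Finite {m : σ →₀ ℕ // m.degree = k} := (Finsupp.finite_of_degree_eq k).to_subtype
    have := Fintype.ofFinite {m : σ →₀ ℕ // m.degree = k}
    refine ⟨∑ m, monomial m.1 (w m),
      Submodule.sum_mem _ fun m _ => isHomogeneous_monomial _ m.2, _root_.funext fun m => ?_⟩
    simp [c, coeff_monomial, ← Subtype.ext_iff]
  · intro h p hp
    obtain ⟨q, hq, hqp⟩ := h.ge (Submodule.mem_top (x := c p))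
    suffices q = p from this ▸ hq
    ext m
    by_cases hm : m.degree = k
    · exact congrFun hqp ⟨m, hm⟩
    · rw [IsHomogeneous.coeff_eq_zero (hle hq) hm, IsHomogeneous.coeff_eq_zero hp hm]

theorem homogeneousSubmodule_le_span_map_of_injective {ι R K L : Type*} [Finite σ] [CommRing R]
    [Field K] [Field L] (φ : R →+* K) {ψ : R →+* L} (hψ : Function.Injective ψ) {k : ℕ}
    {v : ι → MvPolynomial σ R} (hv : ∀ i, (v i).IsHomogeneous k)
    (h : homogeneousSubmodule σ K k ≤ Submodule.span K (Set.range fun i => map φ (v i))) :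
    homogeneousSubmodule σ L k ≤ Submodule.span L (Set.range fun i => map ψ (v i)) := by
  have : Finite {m : σ →₀ ℕ // m.degree = k} := (Finsupp.finite_of_degree_eq k).to_subtype
  rw [homogeneousSubmodule_le_span_range_iff fun i => (hv i).map _] at h ⊢
  simp only [coeff_map] at h ⊢
  exact span_comp_eq_top_of_injective φ hψ h

theorem mem_span_monomial_mul_of_mem_ideal_span {ι R : Type*} [Finite ι] [CommSemiring R]
    {e k : ℕ} {f : ι → MvPolynomial σ R} (hf : ∀ i, (f i).IsHomogeneous e)
    {p : MvPolynomial σ R} (hp : p.IsHomogeneous k) (hpf : p ∈ Ideal.span (Set.range f)) :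
    p ∈ Submodule.span R (Set.range
      fun c : {c : (σ →₀ ℕ) × ι // c.1.degree + e = k} => monomial c.1.1 1 * f c.1.2) := by
  cases nonempty_fintype ι
  obtain ⟨g, rfl⟩ := Ideal.mem_span_range_iff_exists_fun.1 hpf
  rw [← homogeneousComponent_eq_self hp, map_sum]
  refine Submodule.sum_mem _ fun i _ => ?_
  induction g i using MvPolynomial.induction_on' with
  | add p q hp hq =>
    rw [add_mul, map_add]
    exact Submodule.add_mem _ hp hq
  | monomial c r =>
    have hr : monomial c r * f i = r • (monomial c 1 * f i) := by
      rw [← smul_mul_assoc, smul_monomial, smul_eq_mul, mul_one]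
    rw [hr, map_smul,
      homogeneousComponent_of_mem ((isHomogeneous_monomial 1 rfl).mul (hf i))]
    refine Submodule.smul_mem _ _ ?_
    split_ifs with h
    · exact Submodule.subset_span ⟨⟨(c, i), h.symm⟩, rfl⟩
    · exact Submodule.zero_mem _

theorem ncard_le_of_monomial_mem_span {K : Type*} [Field K] {s : Set (σ →₀ ℕ)}
    {w : Set (MvPolynomial σ K)} (hw : w.Finite)
    (h : ∀ m ∈ s, monomial m (1 : K) ∈ Submodule.span K w) : s.ncard ≤ w.ncard := by
  have := hw.fintype
  have hli : LinearIndependent K fun m : s => (monomial m.1 (1 : K) : MvPolynomial σ K) := by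
    simpa [Function.comp_def] using
      (basisMonomials σ K).linearIndependent.comp _ (Subtype.val_injective (p := (· ∈ s)))
  have hle := linearIndependent_le_span' _ hli w (by rintro _ ⟨m, rfl⟩; exact h m.1 m.2)
  have hc := Cardinal.toNat_le_toNat hle (Cardinal.natCast_lt_aleph0 (n := _))
  rwa [Cardinal.toNat_natCast, ← Nat.card_eq_fintype_card] at hc

/-- For an exponent `m = e q + r` with `0 ≤ r i < e`, the product `X^r F^q`: an analogue of the
monomial `X^m` in which the forms `F i` of degree `e` take the place of the powers `X i ^ e`. -/
noncomputable def adicMonomial {R : Type*} [CommSemiring R] [Fintype σ] (e : ℕ)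
    (F : σ → MvPolynomial σ R) (m : σ →₀ ℕ) : MvPolynomial σ R :=
  ∏ i, X i ^ (m i % e) * F i ^ (m i / e)

section AdicMonomial

variable [Fintype σ]

theorem adicMonomial_X_pow (R : Type*) [CommSemiring R] (e : ℕ) (m : σ →₀ ℕ) :
    adicMonomial e (fun i => X i ^ e) m = monomial m (1 : R) := by
  rw [monomial_eq, C_1, one_mul, Finsupp.prod_fintype _ _ fun i => pow_zero _]
  exact Finset.prod_congr rfl fun i _ => by rw [← pow_mul, ← pow_add, Nat.mod_add_div]

theorem map_adicMonomial {R S : Type*} [CommSemiring R] [CommSemiring S] (φ : R →+* S) (e : ℕ)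
    (F : σ → MvPolynomial σ R) (m : σ →₀ ℕ) :
    map φ (adicMonomial e F m) = adicMonomial e (fun i => map φ (F i)) m := by
  simp [adicMonomial, map_prod]

theorem isHomogeneous_adicMonomial {R : Type*} [CommSemiring R] {e : ℕ} {F : σ → MvPolynomial σ R}
    (hF : ∀ i, (F i).IsHomogeneous e) (m : σ →₀ ℕ) :
    (adicMonomial e F m).IsHomogeneous m.degree := by
  rw [Finsupp.degree_eq_sum]
  refine IsHomogeneous.prod _ _ _ fun i _ => ?_
  have := (isHomogeneous_X_pow (R := R) i (m i % e)).mul ((hF i).pow (m i / e))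
  rwa [Nat.mod_add_div] at this

theorem adicMonomial_mul {R : Type*} [CommSemiring R] {e : ℕ} (he : 0 < e)
    (F : σ → MvPolynomial σ R) (m : σ →₀ ℕ) (i : σ) :
    adicMonomial e F m * F i = adicMonomial e F (m + Finsupp.single i e) := by
  classical
  have hFi : F i = ∏ j, if j = i then F j else 1 := by simp
  rw [hFi, adicMonomial, adicMonomial, ← Finset.prod_mul_distrib]
  refine Finset.prod_congr rfl fun j _ => ?_
  split_ifs with h
  · simp only [h, Finsupp.add_apply, Finsupp.single_eq_same, Nat.add_mod_right,
      Nat.add_div_right _ he]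
    ring
  · simp [h]

theorem mem_span_adicMonomial_of_mem_ideal_span {R : Type*} [CommSemiring R] {e k : ℕ}
    (he : 0 < e) {F : σ → MvPolynomial σ R} (hF : ∀ i, (F i).IsHomogeneous e)
    (hspan : ∀ k, homogeneousSubmodule σ R k ≤
      Submodule.span R (adicMonomial e F '' {m | m.degree = k}))
    {p : MvPolynomial σ R} (hp : p.IsHomogeneous k) (hpF : p ∈ Ideal.span (Set.range F)) :
    p ∈ Submodule.span R (adicMonomial e F '' {m | m.degree = k ∧ ∃ i, e ≤ m i}) := by
  suffices h : ∀ (c : σ →₀ ℕ) (i : σ), c.degree + e = k → monomial c 1 * F i ∈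
      Submodule.span R (adicMonomial e F '' {m | m.degree = k ∧ ∃ i, e ≤ m i}) by
    refine Submodule.span_le.2 ?_ (mem_span_monomial_mul_of_mem_ideal_span hF hp hpF)
    rintro _ ⟨⟨⟨c, i⟩, hc⟩, rfl⟩
    exact h c i hc
  intro c i hc
  suffices Submodule.span R (adicMonomial e F '' {m | m.degree = c.degree}) ≤
      (Submodule.span R (adicMonomial e F '' {m | m.degree = k ∧ ∃ i, e ≤ m i})).comap
        (LinearMap.mulRight R (F i)) from this (hspan _ (isHomogeneous_monomial 1 rfl))
  refine Submodule.span_le.2 ?_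
  rintro _ ⟨m, hm, rfl⟩
  refine Submodule.subset_span ⟨m + Finsupp.single i e, ⟨?_, i, by simp⟩,
    (adicMonomial_mul he F m i).symm⟩
  rw [map_add, Finsupp.degree_single, hm, hc]

theorem not_homogeneousSubmodule_le_ideal_span_of_adicMonomial {K : Type*} [Field K] {e : ℕ}
    (he : 0 < e) {F : σ → MvPolynomial σ K} (hF : ∀ i, (F i).IsHomogeneous e)
    (hspan : ∀ k, homogeneousSubmodule σ K k ≤
      Submodule.span K (adicMonomial e F '' {m | m.degree = k})) :
    ¬ homogeneousSubmodule σ K (Fintype.card σ * (e - 1)) ≤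
      (Ideal.span (Set.range F)).restrictScalars K := by
  intro h
  set N := Fintype.card σ * (e - 1)
  have hfin : {m : σ →₀ ℕ | m.degree = N}.Finite := Finsupp.finite_of_degree_eq N
  have hfin' : {m : σ →₀ ℕ | m.degree = N ∧ ∃ i, e ≤ m i}.Finite := hfin.subset fun _ => And.left
  have hlt : {m : σ →₀ ℕ | m.degree = N ∧ ∃ i, e ≤ m i}.ncard <
      {m : σ →₀ ℕ | m.degree = N}.ncard := by
    refine Set.ncard_lt_ncard ⟨fun _ => And.left, fun hsub => ?_⟩ hfin
    obtain ⟨-, i, hi⟩ := hsub (a := Finsupp.equivFunOnFinite.symm fun _ => e - 1)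
      (by simp [Finsupp.degree_eq_sum, N])
    rw [Finsupp.equivFunOnFinite_symm_apply_apply] at hi
    omega
  refine hlt.not_ge ((ncard_le_of_monomial_mem_span (hfin'.image (adicMonomial e F))
    fun m hm => ?_).trans (Set.ncard_image_le hfin'))
  have hm' : (monomial m (1 : K)).IsHomogeneous N := isHomogeneous_monomial 1 hm
  exact mem_span_adicMonomial_of_mem_ideal_span he hF hspan hm' (h hm')

theorem not_homogeneousSubmodule_le_ideal_span {K : Type*} [Field K] {e : ℕ}
    (he : 0 < e) {f : σ → MvPolynomial σ K} (hf : ∀ i, (f i).IsHomogeneous e) :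
    ¬ homogeneousSubmodule σ K (Fintype.card σ * (e - 1)) ≤
      (Ideal.span (Set.range f)).restrictScalars K := by
  intro h
  let F (i : σ) : MvPolynomial σ (Polynomial K) :=
    C (1 - Polynomial.X) * X i ^ e + C Polynomial.X * map Polynomial.C (f i)
  let ψ := algebraMap (Polynomial K) (FractionRing (Polynomial K))
  have hψ : Function.Injective ψ := IsFractionRing.injective _ _
  have hF (i : σ) : (F i).IsHomogeneous e :=
    ((isHomogeneous_X_pow i e).C_mul _).add (((hf i).map _).C_mul _)
  have hF₀ (i : σ) : map (Polynomial.evalRingHom 0) (F i) = X i ^ e := by simp [F]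
  have hF₁ (i : σ) : map (Polynomial.evalRingHom 1) (F i) = f i := by
    have : (Polynomial.evalRingHom 1).comp Polynomial.C = RingHom.id K := by ext; simp
    simp [F, MvPolynomial.map_map, this, MvPolynomial.map_id]
  refine not_homogeneousSubmodule_le_ideal_span_of_adicMonomial he (fun i => (hF i).map ψ)
    (fun k => ?_) ?_
  · have := homogeneousSubmodule_le_span_map_of_injective (Polynomial.evalRingHom 0) hψ
      (v := fun m : {m : σ →₀ ℕ | m.degree = k} => adicMonomial e F m)
      (fun m => m.2 ▸ isHomogeneous_adicMonomial hF m) (by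
        simp only [map_adicMonomial, hF₀, adicMonomial_X_pow]
        rw [homogeneousSubmodule_eq_span_monomial, Set.image_eq_range])
    simpa only [map_adicMonomial, Set.image_eq_range] using this
  · refine (homogeneousSubmodule_le_span_map_of_injective (Polynomial.evalRingHom 1) hψ
      (v := fun c : {c : (σ →₀ ℕ) × σ // c.1.degree + e = Fintype.card σ * (e - 1)} =>
        monomial c.1.1 1 * F c.1.2)
      (fun c => c.2 ▸ (isHomogeneous_monomial 1 rfl).mul (hF c.1.2)) fun p hp => ?_).trans
      (Submodule.span_le.2 ?_)
    · simpa only [map_mul, map_monomial, map_one, hF₁] using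
        mem_span_monomial_mul_of_mem_ideal_span hf hp (h hp)
    · rintro _ ⟨c, rfl⟩
      dsimp only
      rw [map_mul]
      exact Ideal.mul_mem_left _ _ (Ideal.subset_span ⟨c.1.2, rfl⟩)

end AdicMonomial

theorem mem_of_forall_sum_prod_pow_smul_mem {K V : Type*} [Field K] [Infinite K] [AddCommGroup V]
    [Module K V] {W : Submodule K V} {s : Finset (σ →₀ ℕ)} {u : (σ →₀ ℕ) → V}
    (h : ∀ y : σ → K, ∑ m ∈ s, (m.prod fun i a => y i ^ a) • u m ∈ W) {m : σ →₀ ℕ} (hm : m ∈ s) :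
    u m ∈ W := by
  classical
  by_contra hmW
  obtain ⟨φ, hφm, hφ⟩ := Submodule.exists_le_ker_of_notMem hmW
  have hP : ∑ a ∈ s, monomial a (φ (u a)) = 0 := MvPolynomial.funext fun y => by
    have hy : φ _ = 0 := hφ (h y)
    simpa [eval_monomial, mul_comm] using hy
  refine hφm ?_
  simpa [coeff_sum, coeff_monomial, hm] using congrArg (coeff m) hP

theorem linearForm_pow {R : Type*} [CommSemiring R] [Fintype σ] [DecidableEq σ] (y : σ → R)
    (k : ℕ) :
    (∑ i, C (y i) * X i) ^ k = ∑ m ∈ Finset.univ.finsuppAntidiag k,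
      (m.prod fun i a => y i ^ a) • monomial m (m.multinomial : R) := by
  ext m
  have hsmul : (∑ i, C (y i) * X i : MvPolynomial σ R) = ∑ i, y i • X i := by
    simp only [smul_eq_C_mul]
  rw [hsmul, coeff_linearCombination_X_pow_of_fintype]
  simp [coeff_sum, coeff_monomial, Finsupp.sum_fintype, mul_comm]

theorem homogeneousSubmodule_le_of_forall_linearForm_pow_mem {K : Type*} [Field K] [CharZero K]
    [Fintype σ] {k : ℕ} {W : Submodule K (MvPolynomial σ K)}
    (h : ∀ y : σ → K, (∑ i, C (y i) * X i) ^ k ∈ W) : homogeneousSubmodule σ K k ≤ W := by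
  classical
  rw [homogeneousSubmodule_eq_span_monomial, Submodule.span_le]
  rintro _ ⟨m, hm, rfl⟩
  have hmem : monomial m (m.multinomial : K) ∈ W :=
    mem_of_forall_sum_prod_pow_smul_mem (s := Finset.univ.finsuppAntidiag k)
      (u := fun m => monomial m (m.multinomial : K)) (fun y => linearForm_pow y k ▸ h y)
      (by simpa [Finset.mem_finsuppAntidiag, Finsupp.degree_eq_sum] using hm)
  have hne : (m.multinomial : K) ≠ 0 := Nat.cast_ne_zero.2 (Nat.multinomial_pos _ _).ne'
  simpa [smul_monomial, hne] using W.smul_mem (m.multinomial : K)⁻¹ hmem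

theorem pderiv_bind₁ {τ R : Type*} [CommSemiring R] [Fintype σ] (h : σ → MvPolynomial τ R)
    (p : MvPolynomial σ R) (j : τ) :
    pderiv j (bind₁ h p) = ∑ i, bind₁ h (pderiv i p) * pderiv j (h i) := by
  classical
  induction p using MvPolynomial.induction_on with
  | C a => simp
  | add p q hp hq => simp only [map_add, hp, hq, add_mul, Finset.sum_add_distrib]
  | mul_X p k hp =>
    simp only [map_mul, bind₁_X_right, pderiv_mul, hp, map_add, add_mul, Finset.sum_add_distrib,
      pderiv_X, Finset.sum_mul]
    congr 1
    · exact Finset.sum_congr rfl fun i _ => mul_right_comm _ _ _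
    · simp [Pi.single_apply]

section Substitution

variable {n : ℕ} (M N : Matrix (Fin n) (Fin n) ℂ) (p : MvPolynomial (Fin n) ℂ)

theorem substM_eq_bind₁ : substM M p = bind₁ M.toMvPolynomial p := by
  have hM : M.toMvPolynomial = fun i => ∑ j, C (M i j) * X j := by
    ext1 i
    simp only [toMvPolynomial, C_mul_X_eq_monomial]
  rw [substM, bind₁, hM]

theorem substM_substM : substM M (substM N p) = substM (N * M) p := by
  simp only [substM_eq_bind₁, bind₁_bind₁, ← toMvPolynomial_mul]

theorem substM_one : substM 1 p = p := by
  rw [substM_eq_bind₁, toMvPolynomial_one, bind₁_X_left, AlgHom.id_apply]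

theorem eval_substM (y : Fin n → ℂ) : eval y (substM M p) = eval (M *ᵥ y) p := by
  have hMy : M *ᵥ y = fun i => eval y (M.toMvPolynomial i) := by
    ext1 i
    rw [toMvPolynomial_eval_eq_apply]
  rw [substM_eq_bind₁, hMy]
  exact eval₂Hom_bind₁ _ _ _ _

theorem isHomogeneous_substM {k : ℕ} {q : MvPolynomial (Fin n) ℂ} (hq : q.IsHomogeneous k) :
    (substM M q).IsHomogeneous k := by
  rw [substM_eq_bind₁, ← one_mul k]
  exact hq.aeval _ M.toMvPolynomial_isHomogeneous

theorem substM_linearForm (y : Fin n → ℂ) :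
    substM M (∑ i, C (y i) * X i) = ∑ i, C ((Mᵀ *ᵥ y) i) * X i := by
  simp only [substM, map_sum, map_mul, aeval_C, algebraMap_eq, aeval_X, Finset.mul_sum, mulVec,
    dotProduct, transpose_apply, Finset.sum_mul]
  rw [Finset.sum_comm]
  exact Finset.sum_congr rfl fun j _ => Finset.sum_congr rfl fun i _ => by ring

theorem pderiv_substM (j : Fin n) :
    pderiv j (substM M p) = ∑ i, C (M i j) * substM M (pderiv i p) := by
  have hM (i : Fin n) : pderiv j (M.toMvPolynomial i) = C (M i j) := by
    simp [toMvPolynomial, ← C_mul_X_eq_monomial, pderiv_X, Pi.single_apply]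
  simp only [substM_eq_bind₁, pderiv_bind₁, hM, mul_comm]

theorem hess_substM : hess (substM M p) = C (M.det ^ 2) * substM M (hess p) := by
  have hM : (of fun i j => pderiv i (pderiv j (substM M p))) =
      (M.map C)ᵀ * (of fun i j => substM M (pderiv i (pderiv j p))) * M.map C := by
    ext1 i j
    simp only [of_apply, pderiv_substM, map_sum, pderiv_mul, pderiv_C, zero_mul, zero_add,
      mul_apply, transpose_apply, map_apply, Finset.mul_sum, Finset.sum_mul]
    exact Finset.sum_congr rfl fun k _ => Finset.sum_congr rfl fun l _ => by ring
  have hC : (M.map C).det = (C M.det : MvPolynomial (Fin n) ℂ) := (RingHom.map_det _ _).symm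
  have hs : (of fun i j => substM M (pderiv i (pderiv j p))).det = substM M (hess p) :=
    (AlgHom.map_det _ _).symm
  rw [hess, hM, det_mul, det_mul, det_transpose, hC, hs, map_pow]
  ring

variable {M}

theorem substM_pderiv (hM : IsUnit M.det) (i : Fin n) :
    substM M (pderiv i p) = ∑ j, C (M⁻¹ j i) * pderiv j (substM M p) := by
  have hp : substM M⁻¹ (substM M p) = p := by rw [substM_substM, mul_nonsing_inv M hM, substM_one]
  nth_rw 1 [← hp, pderiv_substM, substM_eq_bind₁, map_sum]
  refine Finset.sum_congr rfl fun j _ => ?_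
  rw [map_mul, bind₁_C_right, ← substM_eq_bind₁, substM_substM, nonsing_inv_mul M hM, substM_one]

theorem substM_mem_jacIdeal (hM : IsUnit M.det) {f q : MvPolynomial (Fin n) ℂ}
    (hq : q ∈ jacIdeal f) : substM M q ∈ jacIdeal (substM M f) := by
  suffices jacIdeal f ≤ (jacIdeal (substM M f)).comap (bind₁ M.toMvPolynomial) by
    simpa only [substM_eq_bind₁, Ideal.mem_comap] using this hq
  refine Ideal.span_le.2 ?_
  rintro _ ⟨i, rfl⟩
  rw [SetLike.mem_coe, Ideal.mem_comap, ← substM_eq_bind₁, substM_pderiv _ hM]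
  exact Ideal.sum_mem _ fun j _ => Ideal.mul_mem_left _ _ (Ideal.subset_span ⟨j, rfl⟩)

end Substitution

theorem hess_notMem_jacIdeal {n d : ℕ} (hd : 2 ≤ d) {f Af : MvPolynomial (Fin n) ℂ}
    (hf : f.IsHomogeneous d) (hAf : IsAssociatedForm n d f Af) : hess f ∉ jacIdeal f := by
  intro hmem
  refine not_homogeneousSubmodule_le_ideal_span (e := d - 1) (by omega)
    (fun i => hf.pderiv (i := i)) (homogeneousSubmodule_le_of_forall_linearForm_pow_mem fun y => ?_)
  rw [Fintype.card_fin]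
  have h := Ideal.add_mem _ (Ideal.Quotient.eq.1 (hAf.2 y))
    (Ideal.mul_mem_left _ (C (eval y Af)) hmem)
  rwa [sub_add_cancel] at h

theorem IsAssociatedForm.unique {n d : ℕ} (hd : 2 ≤ d) {f A₁ A₂ : MvPolynomial (Fin n) ℂ}
    (hf : f.IsHomogeneous d) (h₁ : IsAssociatedForm n d f A₁) (h₂ : IsAssociatedForm n d f A₂) :
    A₁ = A₂ := by
  refine MvPolynomial.funext fun y => ?_
  by_contra hne
  have hmem := Ideal.Quotient.eq.1 ((h₁.2 y).symm.trans (h₂.2 y))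
  rw [← sub_mul, ← C_sub, ← smul_eq_C_mul, ← Submodule.restrictScalars_mem ℂ] at hmem
  exact hess_notMem_jacIdeal hd hf h₁ ((Submodule.smul_mem_iff _ (sub_ne_zero.2 hne)).1 hmem)

theorem IsAssociatedForm.substM_inv {n d : ℕ} {f Af : MvPolynomial (Fin n) ℂ}
    {g : Matrix (Fin n) (Fin n) ℂ} (hg : IsUnit g.det) (hAf : IsAssociatedForm n d f Af) :
    IsAssociatedForm n d (substM g⁻¹ f) (C (g.det ^ 2) * substM gᵀ Af) := by
  refine ⟨(isHomogeneous_substM _ hAf.1).C_mul _, fun y => Ideal.Quotient.eq.2 ?_⟩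
  have hg' : IsUnit g⁻¹.det := isUnit_nonsing_inv_det_iff.2 hg
  have hdet : g.det ^ 2 * g⁻¹.det ^ 2 = 1 := by
    rw [← mul_pow, ← det_mul, mul_nonsing_inv g hg, det_one, one_pow]
  have hmem := substM_mem_jacIdeal hg' (Ideal.Quotient.eq.1 (hAf.2 (gᵀ *ᵥ y)))
  have hpow : substM g⁻¹ ((∑ i, C ((gᵀ *ᵥ y) i) * X i) ^ (n * (d - 2))) =
      (∑ i, C (y i) * X i) ^ (n * (d - 2)) := by
    rw [substM_eq_bind₁, map_pow, ← substM_eq_bind₁, substM_linearForm, mulVec_mulVec,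
      ← transpose_mul, mul_nonsing_inv g hg, transpose_one, one_mulVec]
  have hhess : substM g⁻¹ (C (eval (gᵀ *ᵥ y) Af) * hess f) =
      C (eval y (C (g.det ^ 2) * substM gᵀ Af)) * hess (substM g⁻¹ f) := by
    rw [hess_substM, eval_mul, eval_C, eval_substM, ← mul_assoc, ← C_mul, mul_right_comm, hdet,
      one_mul, substM_eq_bind₁, map_mul, bind₁_C_right, ← substM_eq_bind₁]
  rw [← hpow, ← hhess]
  simpa only [substM_eq_bind₁, map_sub] using hmem

/-- Equivariance of the associated form: for nondegenerate `f` of degree `d ≥ 3`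
and `g ∈ GLₙ(ℂ)`, one has `A(g·f) = (det g)² · (g·A(f))`, where `(g·f)(x) = f(x·g⁻ᵗ)`
(i.e. `g·f = f ∘ g⁻¹`) and `(g·F)(y) = F(y·g)` (i.e. `g·F = F ∘ gᵀ`). -/
theorem associatedForm_equivariance (n d : ℕ) (hn : 2 ≤ n) (hd : 3 ≤ d)
    (f : MvPolynomial (Fin n) ℂ) (hf : f.IsHomogeneous d)
    (hnd : ∀ x : Fin n → ℂ, (∀ i, eval x (pderiv i f) = 0) → x = 0)
    (g : Matrix (Fin n) (Fin n) ℂ) (hg : IsUnit g.det)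
    (Af Agf : MvPolynomial (Fin n) ℂ)
    (hAf : IsAssociatedForm n d f Af)
    (hAgf : IsAssociatedForm n d (substM g⁻¹ f) Agf) :
    Agf = C (g.det ^ 2) * substM gᵀ Af :=
  hAgf.unique (by omega) (isHomogeneous_substM _ hf) (hAf.substM_inv hg)
end

section
/- The determinantal variety W'_d ⊆ ℂ[x,y]_{d-1} ⊕ ℂ[x,y]_{d-1} consisting of pairs (f₁,f₂) whose four partial derivatives (f₁)_x, (f₁)_y, (f₂)_x, (f₂)_y are linearly dependent is, for d ≥ 4, a Cohen–Macaulay, reduced, and normal variety of dimension d + 4. In particular, it is smooth at the point ((d−1)x^{d-2}y, y^{d-1}). -/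
open MvPolynomial

/-- A Noetherian local ring is Cohen–Macaulay iff its maximal ideal contains a regular
sequence of length equal to its Krull dimension. -/
def IsCMLocalRing (S : Type*) [CommRing S] [IsLocalRing S] : Prop :=
  ∃ rs : List S, (∀ r ∈ rs, r ∈ IsLocalRing.maximalIdeal S)
    ∧ RingTheory.Sequence.IsRegular S rs
    ∧ (rs.length : WithBot (WithTop ℕ)) = ringKrullDim S

/-- A Noetherian local ring is regular iff its maximal ideal is generated by
`dim`-many elements. -/
def IsRegLocalRing (S : Type*) [CommRing S] [IsLocalRing S] : Prop :=
  ∃ s : Finset S, Ideal.span (s : Set S) = IsLocalRing.maximalIdeal S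
    ∧ ((s.card : ℕ) : WithBot (WithTop ℕ)) = ringKrullDim S

/-- The generic `4 × (d-1)` matrix of the pairs `(f₁,f₂)` of binary forms of degree `d-1`,
`f₁ = ∑ C(d-1,i)aᵢx^(d-1-i)yⁱ`, `f₂ = ∑ C(d-1,i)bᵢx^(d-1-i)yⁱ`, with rows
`(a₀,…,a_(d-2))`, `(a₁,…,a_(d-1))`, `(b₀,…,b_(d-2))`, `(b₁,…,b_(d-1))`;
here the variable `X (0,i)` stands for `aᵢ` and `X (1,i)` for `bᵢ`. -/
noncomputable def genMat (d : ℕ) :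
    Matrix (Fin 4) (Fin (d - 1)) (MvPolynomial (Fin 2 × Fin d) ℂ) :=
  fun r s => X (⟨(r : ℕ) / 2, by have := r.isLt; omega⟩,
    ⟨(s : ℕ) + (r : ℕ) % 2, by have := s.isLt; have := r.isLt; omega⟩)

/-- The ideal of `4 × 4` minors of `genMat d`, cutting out the variety `W'_d` of pairs
`(f₁,f₂)` whose four partial derivatives are linearly dependent. -/
noncomputable def minorsIdeal (d : ℕ) : Ideal (MvPolynomial (Fin 2 × Fin d) ℂ) :=
  Ideal.span {p | ∃ c : Fin 4 → Fin (d - 1), p = ((genMat d).submatrix id c).det}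

/-- The point of `W'_d` corresponding to the pair `((d-1)x^(d-2)y, y^(d-1))`:
`a₁ = 1`, `b_(d-1) = 1` and all other coordinates `0`. -/
noncomputable def specialPoint (d : ℕ) (hd : 4 ≤ d) : Fin 2 × Fin d → ℂ :=
  fun q => if q = (0, ⟨1, by omega⟩) then 1 else if q = (1, ⟨d - 1, by omega⟩) then 1 else 0

/-- The maximal ideal of the coordinate ring of `W'_d` at the special point. -/
noncomputable def specialMaxIdeal (d : ℕ) (hd : 4 ≤ d) :
    Ideal (MvPolynomial (Fin 2 × Fin d) ℂ ⧸ minorsIdeal d) :=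
  (Ideal.span {p | ∃ s : Fin 2 × Fin d, p = X s - C (specialPoint d hd s)}).map
    (Ideal.Quotient.mk (minorsIdeal d))

/-!
Write `d = N + 4`. Modulo the `d + 4` parameters `b₀`, `a₀`, `a₁`, `a_{N+3}`, `b_{N+3}` and
`a_{j+2} - b_j` for `0 ≤ j ≤ N + 2`, where `a_{N+4} = 0`, the `4 × (d - 1)` matrix of derivatives
becomes the Hankel matrix of a single sequence. Its minors rewrite a product of four of the
remaining coordinates `b₁, …, b_N` in terms of products of larger energy `∑ i²`, so that the
coordinate ring is spanned, as a module over the polynomial ring in the parameters, by the monomials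
of degree at most three in `b₁, …, b_N`. These `C(N + 3, 3)` monomials are independent: the pairs
satisfying a relation `c₀ a_s + c₁ a_{s+1} + c₂ b_s + b_{s+1} = 0` for all `s` form a chart with
polynomial coordinates, and the chart degenerates, one parameter at a time, to pairs attached to the
`3`-element subsets of `N + 3` generic numbers, which the monomials separate.

Hence the coordinate ring is finite free over a polynomial ring in `d + 4` variables, so it is
Cohen–Macaulay of dimension `d + 4`, and it embeds into the coordinate ring of the chart, so it is a
domain. It agrees with the coordinate ring of a chart after inverting a `3 × 3` minor of the first
three rows, or, reversing the two forms, of the last three. Thus powers of all these minors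
clear the denominators of an element integral over the ring. The common zeros of the minors are
finite over an affine space of dimension `d + 2`, by the same straightening for `3 × 3` minors, so
the minors generate an ideal containing two relatively prime polynomials in the parameters, and
freeness makes the denominators disappear.

At the special point, expanding the minor on the columns `0`, `1`, `N + 2`, `j` along the row of
`b_j` puts `b_j` into the square of the maximal ideal for `2 ≤ j ≤ N + 1`, and the other `d + 4`
coordinates generate the cotangent space.
-/

section Straightening

lemma sum_sq_lt_sum_sq_add_sub_perm {k : ℕ} {μ : Fin k → ℤ} (hμ : Monotone μ)
    {σ : Equiv.Perm (Fin k)} (hσ : σ ≠ 1) :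
    ∑ j, μ j ^ 2 < ∑ j, (μ j + (j : ℕ) - (σ j : ℕ)) ^ 2 := by
  set g : Fin k → ℤ := fun j => (j : ℕ)
  have hg : StrictMono g := fun i j hij => Int.ofNat_lt.2 hij
  have hw : StrictMono (μ + g) := hμ.add_strictMono hg
  have hlt : ∑ j, (μ + g) j * g (σ j) < ∑ j, (μ + g) j * g j := by
    rw [(hw.monotone.monovary hg.monotone).sum_mul_comp_perm_lt_sum_mul_iff]
    intro h
    have hσ' : StrictMono (σ⁻¹ : Equiv.Perm (Fin k)) := by
      refine Monotone.strictMono_of_injective (fun a b hab => ?_) (Equiv.injective _)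
      rcases hab.eq_or_lt with rfl | hab
      · exact le_rfl
      · exact hw.le_iff_le.1 (@h (σ⁻¹ a) (σ⁻¹ b) (by simpa using hg hab))
    have hrefl := Subsingleton.elim (hσ'.orderIsoOfSurjective _ (Equiv.surjective _))
      (OrderIso.refl _)
    exact hσ (inv_eq_one.1 (Equiv.ext fun a => DFunLike.congr_fun hrefl a))
  have hsq : ∑ j, g (σ j) ^ 2 = ∑ j, g j ^ 2 := Equiv.sum_comp σ (g · ^ 2)
  have hdiff : ∑ j, (μ j + g j - g (σ j)) ^ 2 - ∑ j, μ j ^ 2 =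
      2 * (∑ j, (μ + g) j * g j - ∑ j, (μ + g) j * g (σ j))
        + (∑ j, g (σ j) ^ 2 - ∑ j, g j ^ 2) := by
    simp only [Finset.mul_sum, ← Finset.sum_sub_distrib, ← Finset.sum_add_distrib]
    exact Finset.sum_congr rfl fun j _ => by simp only [Pi.add_apply]; ring
  change _ < ∑ j, (μ j + g j - g (σ j)) ^ 2
  linarith

variable {A B : Type*} [CommRing A] [CommRing B] [Algebra A B]

lemma multiset_prod_map_mem_pow_card {κ : Type*} {V : Submodule A B} {η : κ → B}
    (hη : ∀ i, η i ∈ V) (ν : Multiset κ) : (ν.map η).prod ∈ V ^ ν.card := by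
  induction ν using Multiset.induction_on with
  | empty => simp [Submodule.one_le.1 le_rfl]
  | cons a t ih =>
    rw [Multiset.map_cons, Multiset.prod_cons, Multiset.card_cons, pow_succ']
    exact Submodule.mul_mem_mul (hη a) ih

lemma prod_sub_prod_mem_pow {V : Submodule A B} (h1 : 1 ≤ V) {n : ℕ} {x y : Fin n → B}
    (hy : ∀ i, y i ∈ V) (hxy : ∀ i, x i - y i ∈ (1 : Submodule A B)) :
    ∏ i, x i - ∏ i, y i ∈ V ^ (n - 1) := by
  induction n with
  | zero => simp
  | succ n ih =>
    have hx (i) : x i ∈ V := by simpa using V.add_mem (h1 (hxy i)) (hy i)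
    have hy' : ∏ i : Fin n, y i.succ ∈ V ^ n := by
      have := multiset_prod_map_mem_pow_card (fun i => hy (Fin.succ i)) Finset.univ.val
      rwa [Finset.card_val, Finset.card_univ, Fintype.card_fin] at this
    have hsplit : ∏ i, x i - ∏ i, y i = (x 0 - y 0) * ∏ i : Fin n, y i.succ
        + x 0 * (∏ i : Fin n, x i.succ - ∏ i : Fin n, y i.succ) := by
      rw [Fin.prod_univ_succ, Fin.prod_univ_succ]; ring
    rw [hsplit, Nat.add_sub_cancel]
    refine add_mem (by simpa using Submodule.mul_mem_mul (hxy 0) hy') ?_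
    cases n with
    | zero => simp
    | succ n =>
      rw [pow_succ']
      exact Submodule.mul_mem_mul (hx 0) (ih (fun i => hy i.succ) fun i => hxy i.succ)

lemma sum_perm_sign_smul_prod_mem_pow {V : Submodule A B} (h1 : 1 ≤ V) {n : ℕ}
    {H M : Matrix (Fin (n + 1)) (Fin (n + 1)) B} (hH : ∀ i j, H i j ∈ V) (hM : M.det = 0)
    (hMH : ∀ i j, M i j - H i j ∈ (1 : Submodule A B)) :
    ∑ σ : Equiv.Perm (Fin (n + 1)), (σ.sign : ℤ) • ∏ j, H (σ j) j ∈ V ^ n := by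
  have hdet : ∑ σ : Equiv.Perm (Fin (n + 1)), (σ.sign : ℤ) • ∏ j, H (σ j) j =
      -∑ σ : Equiv.Perm (Fin (n + 1)), (σ.sign : ℤ) • (∏ j, M (σ j) j - ∏ j, H (σ j) j) := by
    have h := M.det_apply'
    simp only [hM, ← zsmul_eq_mul] at h
    simp only [smul_sub, Finset.sum_sub_distrib, ← h, zero_sub, neg_neg]
  rw [hdet]
  exact neg_mem <| sum_mem fun σ _ => zsmul_mem
    (prod_sub_prod_mem_pow (n := n + 1) h1 (fun _ => hH _ _) fun _ => hMH _ _) _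

variable {V : Submodule A B} {η : ℤ → B} {n m : ℕ}

/-- The determinant being zero, its diagonal term is, up to lower filtration degree, a combination
of the other terms. -/
lemma prod_mul_mem_pow_of_det_eq_zero (h1 : 1 ≤ V) (hη : ∀ i, η i ∈ V) {μ : Fin (n + 1) → ℤ}
    {M : Matrix (Fin (n + 1)) (Fin (n + 1)) B} (hM : M.det = 0)
    (hMη : ∀ i j, M i j - η (μ j + (j : ℕ) - (i : ℕ)) ∈ (1 : Submodule A B)) {P : B}
    (hP : P ∈ V ^ m)
    (hσ : ∀ σ : Equiv.Perm (Fin (n + 1)), σ ≠ 1 →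
      (∏ j, η (μ j + (j : ℕ) - (σ j : ℕ))) * P ∈ V ^ (n + m)) :
    (∏ j, η (μ j)) * P ∈ V ^ (n + m) := by
  have hsum := Submodule.mul_mem_mul (sum_perm_sign_smul_prod_mem_pow h1
    (H := .of fun i j => η (μ j + (j : ℕ) - (i : ℕ))) (fun _ _ => hη _) hM hMη) hP
  rw [← pow_add, Fintype.sum_eq_add_sum_compl 1, add_mul, Finset.sum_mul] at hsum
  have hrest := sum_mem fun σ (h : σ ∈ ({1}ᶜ : Finset (Equiv.Perm (Fin (n + 1))))) =>
    zsmul_mem (hσ σ (by simpa using h)) (σ.sign : ℤ)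
  simp only [← smul_mul_assoc] at hrest
  simpa using (Submodule.add_mem_iff_left _ hrest).1 hsum

lemma sum_sq_le_card_mul_of_forall_mem_Icc {lo hi : ℤ} {ν : Multiset ℤ}
    (hν : ∀ x ∈ ν, x ∈ Set.Icc lo hi) :
    (ν.map (· ^ 2)).sum ≤ ν.card * (|lo| + |hi|) ^ 2 := by
  have hsq : ∀ x ∈ ν.map (· ^ 2), x ≤ (|lo| + |hi|) ^ 2 := by
    simp only [Multiset.mem_map]
    rintro _ ⟨y, hy, rfl⟩
    obtain ⟨h1, h2⟩ := hν y hy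
    refine sq_le_sq' ?_ ?_
    · linarith [neg_abs_le lo, abs_nonneg hi]
    · linarith [le_abs_self hi, abs_nonneg lo]
  simpa using Multiset.sum_le_card_nsmul _ _ hsq

lemma multiset_prod_mem_pow_of_sum_sq_lt (h1 : 1 ≤ V) (hη : ∀ i, η i ∈ V) {μ : Fin (n + 1) → ℤ}
    (hμ : Monotone μ) {M : Matrix (Fin (n + 1)) (Fin (n + 1)) B} (hM : M.det = 0)
    (hMη : ∀ i j, M i j - η (μ j + (j : ℕ) - (i : ℕ)) ∈ (1 : Submodule A B)) {ν : Multiset ℤ}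
    (hν : ν.card = m + 1) (hle : Finset.univ.val.map μ ≤ ν)
    (ih : ∀ ν' : Multiset ℤ, ν'.card = m + 1 → (ν.map (· ^ 2)).sum < (ν'.map (· ^ 2)).sum →
      (ν'.map η).prod ∈ V ^ m) : (ν.map η).prod ∈ V ^ m := by
  obtain ⟨ρ, rfl⟩ := Multiset.le_iff_exists_add.1 hle
  obtain rfl : m = n + ρ.card := by
    simp only [Multiset.card_add, Multiset.card_map, Finset.card_val, Finset.card_univ,
      Fintype.card_fin] at hν
    omega
  have hprod (μ' : Fin (n + 1) → ℤ) : ((Finset.univ.val.map μ' + ρ).map η).prod =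
      (∏ j, η (μ' j)) * (ρ.map η).prod := by
    rw [Multiset.map_add, Multiset.prod_add, Multiset.map_map]; rfl
  have hsum (μ' : Fin (n + 1) → ℤ) : ((Finset.univ.val.map μ' + ρ).map (· ^ 2)).sum =
      ∑ j, μ' j ^ 2 + (ρ.map (· ^ 2)).sum := by
    rw [Multiset.map_add, Multiset.sum_add, Multiset.map_map]; rfl
  rw [hprod]
  refine prod_mul_mem_pow_of_det_eq_zero h1 hη hM hMη (multiset_prod_map_mem_pow_card hη ρ)
    fun σ hσ => ?_
  rw [← hprod fun j => μ j + (j : ℕ) - (σ j : ℕ)]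
  refine ih _ (by simpa using hν) ?_
  rw [hsum, hsum]
  exact (add_lt_add_iff_right _).2 (sum_sq_lt_sum_sq_add_sub_perm hμ hσ)

/-- Replacing the diagonal term of a Hankel minor by the other terms strictly increases the sum of
squares of the indices, so iterating ends at indices outside `[lo, hi]`, where `η` vanishes. -/
theorem multiset_prod_mem_pow_of_hankel_minors (h1 : 1 ≤ V) (hη : ∀ i, η i ∈ V) {lo hi : ℤ}
    (hsupp : ∀ i ∉ Set.Icc lo hi, η i = 0)
    (hminor : ∀ ν : Multiset ℤ, ν.card = m + 1 → (∀ x ∈ ν, x ∈ Set.Icc lo hi) →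
      ∃ μ : Fin (n + 1) → ℤ, Monotone μ ∧ Finset.univ.val.map μ ≤ ν ∧
        ∃ M : Matrix (Fin (n + 1)) (Fin (n + 1)) B, M.det = 0 ∧
          ∀ i j, M i j - η (μ j + (j : ℕ) - (i : ℕ)) ∈ (1 : Submodule A B))
    {ν : Multiset ℤ} (hν : ν.card = m + 1) : (ν.map η).prod ∈ V ^ m := by
  have hout {ν : Multiset ℤ} (hr : ¬ ∀ x ∈ ν, x ∈ Set.Icc lo hi) : (ν.map η).prod ∈ V ^ m := by
    push Not at hr
    obtain ⟨x, hx, hx'⟩ := hr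
    rw [Multiset.prod_eq_zero (Multiset.mem_map.2 ⟨x, hx, hsupp x hx'⟩)]
    exact zero_mem _
  suffices ∀ (e : ℕ) (ν : Multiset ℤ), ν.card = m + 1 →
      (m + 1 : ℕ) * (|lo| + |hi|) ^ 2 < (ν.map (· ^ 2)).sum + e → (ν.map η).prod ∈ V ^ m by
    obtain ⟨e, he⟩ := exists_nat_gt ((m + 1 : ℕ) * (|lo| + |hi|) ^ 2 - (ν.map (· ^ 2)).sum)
    exact this e ν hν (sub_lt_iff_lt_add'.1 he)
  intro e
  induction e with
  | zero =>
    intro ν hν he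
    refine hout fun h => he.not_ge ?_
    simpa [hν] using sum_sq_le_card_mul_of_forall_mem_Icc h
  | succ e ih =>
    intro ν hν he
    by_cases hr : ∀ x ∈ ν, x ∈ Set.Icc lo hi
    · obtain ⟨μ, hμ, hle, M, hM, hMη⟩ := hminor ν hν hr
      refine multiset_prod_mem_pow_of_sum_sq_lt h1 hη hμ hM hMη hν hle fun ν' hν' hlt => ?_
      refine ih ν' hν' ?_
      push_cast at he ⊢
      linarith
    · exact hout hr

end Straightening

section Filtration

variable {κ A B : Type*}

/-- The monomial of degree `k` with exponent `s`, evaluated at the family `x`. -/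
def symProd [CommMonoid B] {k : ℕ} (x : κ → B) (s : Sym κ k) : B :=
  ((s : Multiset κ).map x).prod

lemma map_symProd {B' F : Type*} [CommMonoid B] [CommMonoid B'] [FunLike F B B']
    [MonoidHomClass F B B'] (f : F) {k : ℕ} (x : κ → B) (s : Sym κ k) :
    f (symProd x s) = symProd (f ∘ x) s := by
  rw [symProd, map_multiset_prod, Multiset.map_map, symProd]

variable [CommRing A] [CommRing B] [Algebra A B]

lemma span_range_pow (x : κ → B) (k : ℕ) :
    Submodule.span A (Set.range x) ^ k =
      Submodule.span A (Set.range (symProd x : Sym κ k → B)) := by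
  rw [Submodule.span_pow]
  congr 1
  ext b
  rw [Set.mem_pow]
  constructor
  · rintro ⟨f, rfl⟩
    choose g hg using fun i => (f i).2
    refine ⟨⟨Multiset.map g Finset.univ.val, by simp⟩, ?_⟩
    simp only [symProd, Sym.coe_mk, Multiset.map_map]
    rw [List.prod_ofFn]
    exact Finset.prod_congr rfl fun i _ => hg i
  · rintro ⟨⟨s, hs⟩, rfl⟩
    induction s using Quotient.inductionOn with
    | h l =>
      obtain rfl : l.length = k := by simpa using hs
      exact ⟨fun i => ⟨x (l.get i), Set.mem_range_self _⟩, by simp [symProd]⟩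

lemma span_range_option_elim_one (y : κ → B) :
    Submodule.span A (Set.range fun o : Option κ => o.elim 1 y) =
      1 ⊔ Submodule.span A (Set.range y) := by
  rw [Submodule.one_eq_span, ← Submodule.span_union, ← Set.insert_eq]
  congr 1
  ext b
  simp [Option.exists, eq_comm]

lemma one_sup_pow_succ_le (W : Submodule A B) (m : ℕ) :
    (1 ⊔ W) ^ (m + 1) ≤ (1 ⊔ W) ^ m ⊔ W ^ (m + 1) := by
  induction m with
  | zero => simp
  | succ m ih =>
    calc (1 ⊔ W) ^ (m + 1 + 1) = (1 ⊔ W) ^ (m + 1) ⊔ (1 ⊔ W) ^ (m + 1) * W := by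
          rw [pow_succ, Submodule.mul_sup, mul_one]
      _ ≤ (1 ⊔ W) ^ (m + 1) ⊔ ((1 ⊔ W) ^ m ⊔ W ^ (m + 1)) * W := by gcongr
      _ = (1 ⊔ W) ^ (m + 1) ⊔ ((1 ⊔ W) ^ m * W ⊔ W ^ (m + 1 + 1)) := by
          rw [Submodule.sup_mul, pow_succ W (m + 1)]
      _ ≤ (1 ⊔ W) ^ (m + 1) ⊔ ((1 ⊔ W) ^ m * (1 ⊔ W) ⊔ W ^ (m + 1 + 1)) := by
          gcongr; exact le_sup_right
      _ = (1 ⊔ W) ^ (m + 1) ⊔ W ^ (m + 1 + 1) := by rw [← pow_succ, ← sup_assoc, sup_idem]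

lemma one_sup_span_range_pow_eq_top {η : κ → B} {m : ℕ}
    (hgen : Algebra.adjoin A (Set.range η) = ⊤)
    (hprod : ∀ ν : Multiset κ, ν.card = m + 1 →
      (ν.map η).prod ∈ (1 ⊔ Submodule.span A (Set.range η)) ^ m) :
    (1 ⊔ Submodule.span A (Set.range η)) ^ m = ⊤ := by
  set U := 1 ⊔ Submodule.span A (Set.range η)
  have hsucc : U ^ (m + 1) ≤ U ^ m := by
    refine (one_sup_pow_succ_le _ _).trans (sup_le le_rfl ?_)
    rw [span_range_pow, Submodule.span_le]
    rintro _ ⟨s, rfl⟩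
    exact hprod s s.2
  have hadd (r : ℕ) : U ^ (m + r) ≤ U ^ m := by
    induction r with
    | zero => simp
    | succ r ih =>
      calc U ^ (m + r + 1) ≤ U ^ m * U := by rw [pow_succ]; gcongr
        _ ≤ U ^ m := by rwa [← pow_succ]
  have hone : (1 : B) ∈ U ^ m :=
    Submodule.one_le.1 (one_le_pow_of_one_le' (le_sup_left : 1 ≤ U) m)
  have hmul (x y : B) (hx : x ∈ U ^ m) (hy : y ∈ U ^ m) : x * y ∈ U ^ m :=
    hadd m (pow_add U m m ▸ Submodule.mul_mem_mul hx hy)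
  have hle : Algebra.adjoin A (Set.range η) ≤ (U ^ m).toSubalgebra hone hmul := by
    refine Algebra.adjoin_le ?_
    rintro _ ⟨i, rfl⟩
    have hi : η i ∈ U := Submodule.mem_sup_right (Submodule.subset_span ⟨i, rfl⟩)
    exact hsucc (pow_succ U m ▸ one_mul (η i) ▸ Submodule.mul_mem_mul hone hi)
  rw [hgen] at hle
  exact eq_top_iff.2 fun b _ => hle Algebra.mem_top

end Filtration

section Specialization

lemma eq_zero_of_sum_mul_eq_zero_of_specialization {ι R T T' : Type*} [Fintype ι] [CommRing R]
    [CommRing T] [CommRing T'] (φ : Polynomial R →+* T) (ψ : T →+* T') (r : R)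
    (hreg : φ (.X - .C r) ∈ nonZeroDivisors T) (hψ : ψ (φ (.X - .C r)) = 0) (e : ι → T)
    (h : ∀ g : ι → R, ∑ i, ψ (φ (.C (g i))) * ψ (e i) = 0 → g = 0)
    (f : ι → Polynomial R) (hf : ∑ i, φ (f i) * e i = 0) : f = 0 := by
  nontriviality R
  have heval (p : Polynomial R) : ψ (φ p) = ψ (φ (.C (p.eval r))) := by
    obtain ⟨q, hq⟩ := Polynomial.X_sub_C_dvd_sub_C_eval (p := p) (a := r)
    rw [← sub_eq_zero, ← map_sub, ← map_sub, hq, map_mul, map_mul, hψ, zero_mul]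
  have hroot (f : ι → Polynomial R) (hf : ∑ i, φ (f i) * e i = 0) (i : ι) : (f i).IsRoot r := by
    refine congrFun (h (fun i => (f i).eval r) ?_) i
    simpa only [← heval, ← map_mul, ← map_sum, map_zero] using congrArg ψ hf
  suffices ∀ (n : ℕ) (f : ι → Polynomial R), (∀ i, (f i).natDegree ≤ n) →
      ∑ i, φ (f i) * e i = 0 → f = 0 from
    this (Finset.univ.sup fun i => (f i).natDegree) f
      (fun i => Finset.le_sup (f := fun i => (f i).natDegree) (Finset.mem_univ i)) hf
  intro n
  induction n with
  | zero =>
    intro f hdeg hf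
    funext i
    have hi := Polynomial.eq_C_of_natDegree_le_zero (hdeg i)
    have := hroot f hf i
    rw [hi, Polynomial.IsRoot, Polynomial.eval_C] at this
    rw [hi, this, map_zero, Pi.zero_apply]
  | succ n ih =>
    intro f hdeg hf
    have hdiv (i : ι) : f i = (.X - .C r) * (f i /ₘ (.X - .C r)) :=
      (Polynomial.mul_divByMonic_eq_iff_isRoot.2 (hroot f hf i)).symm
    have hq : (fun i => f i /ₘ (.X - .C r)) = 0 := by
      refine ih _ (fun i => ?_) ((mem_nonZeroDivisors_iff_right.1 hreg) _ ?_)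
      · rw [Polynomial.natDegree_divByMonic _ (Polynomial.monic_X_sub_C r),
          Polynomial.natDegree_X_sub_C]
        exact Nat.sub_le_of_le_add (hdeg i)
      · rw [← hf, Finset.sum_mul]
        refine Finset.sum_congr rfl fun i _ => ?_
        rw [mul_right_comm, ← map_mul, mul_comm (_ /ₘ _), ← hdiv]
    funext i
    have hi : f i /ₘ (.X - .C r) = 0 := congrFun hq i
    rw [hdiv i, hi, mul_zero, Pi.zero_apply]

variable {k T T' ι : Type*} [CommRing k] [CommRing T] [CommRing T'] [Algebra k T] [Algebra k T']
  {n : ℕ}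

lemma aeval_finSuccEquiv_symm (x : Fin (n + 1) → T) (p : Polynomial (MvPolynomial (Fin n) k)) :
    aeval x ((finSuccEquiv k n).symm p) = p.eval₂ (aeval (Fin.tail x) : _ →ₐ[k] T) (x 0) := by
  obtain ⟨q, rfl⟩ := (finSuccEquiv k n).surjective p
  rw [AlgEquiv.symm_apply_apply]
  induction q using MvPolynomial.induction_on with
  | C c => simp [finSuccEquiv_apply]
  | add p q hp hq => simp only [map_add, hp, hq, Polynomial.eval₂_add]
  | mul_X p i hp =>
    rw [map_mul, map_mul, Polynomial.eval₂_mul, hp, aeval_X]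
    cases i using Fin.cases <;> simp [finSuccEquiv_X_zero, finSuccEquiv_X_succ, Fin.tail]

variable [Fintype ι]

/-- The family `e` is linearly independent over the polynomial ring in `n` variables, which acts
through evaluation at `x`. -/
def PolyIndependent (k : Type*) {T ι : Type*} [CommRing k] [CommRing T] [Algebra k T] [Fintype ι]
    {n : ℕ} (x : Fin n → T) (e : ι → T) : Prop :=
  ∀ f : ι → MvPolynomial (Fin n) k, ∑ i, aeval x (f i) * e i = 0 → f = 0

lemma PolyIndependent.of_specialization {x : Fin (n + 1) → T} {e : ι → T} (r : k)
    (hreg : x 0 - algebraMap k T r ∈ nonZeroDivisors T) (ψ : T →ₐ[k] T')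
    (hψ : ψ (x 0) = algebraMap k T' r)
    (h : PolyIndependent k (ψ ∘ Fin.tail x) (ψ ∘ e)) : PolyIndependent k x e := by
  intro f hf
  set E := finSuccEquiv k n
  have hE : (fun i => E (f i)) = 0 := by
    refine eq_zero_of_sum_mul_eq_zero_of_specialization
      (((aeval x : _ →ₐ[k] T).comp E.symm.toAlgHom : _ →ₐ[k] T) : _ →+* T) (ψ : T →+* T') (C r)
      ?_ ?_ e (fun g hg => ?_) _ (by simpa using hf)
    · simpa [E, aeval_finSuccEquiv_symm] using hreg
    · simp [E, aeval_finSuccEquiv_symm, hψ]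
    · have hC (p : MvPolynomial (Fin n) k) :
          ψ (aeval x (E.symm (.C p))) = aeval (ψ ∘ Fin.tail x) p := by
        rw [aeval_finSuccEquiv_symm, Polynomial.eval₂_C]
        exact comp_aeval_apply _ ψ p
      exact h g ((Finset.sum_congr rfl fun i _ => congrArg (· * ψ (e i)) (hC (g i)).symm).trans hg)
  funext i
  exact E.injective ((congrFun hE i).trans (map_zero E).symm)

end Specialization

section RootProducts

variable {ι K : Type*} [CommRing K] (ρ : ι → K)

/-- The polynomial `∏ (1 + ρᵢ z)`, the generating function of the elementary symmetric functions
of the `ρᵢ` with `i ∈ t`. -/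
noncomputable def revProd (t : Finset ι) : Polynomial K :=
  ∏ i ∈ t, (1 + .C (ρ i) * .X)

lemma revProd_natDegree_le (t : Finset ι) : (revProd ρ t).natDegree ≤ t.card := by
  refine (Polynomial.natDegree_prod_le _ _).trans ?_
  rw [Finset.card_eq_sum_ones]
  refine Finset.sum_le_sum fun i _ => ?_
  compute_degree

lemma revProd_coeff_zero (t : Finset ι) : (revProd ρ t).coeff 0 = 1 := by
  simp [revProd, Polynomial.coeff_zero_prod]

lemma revProd_coeff (t : Finset ι) (j : ℕ) :
    (revProd ρ t).coeff j = ∑ u ∈ t.powersetCard j, ∏ i ∈ u, ρ i := by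
  classical
  rw [revProd, Finset.prod_one_add, Polynomial.finsetSum_coeff]
  simp_rw [Finset.prod_mul_distrib, Finset.prod_const, ← map_prod, Polynomial.coeff_C_mul_X_pow]
  rw [Finset.powersetCard_eq_filter, Finset.sum_filter]
  simp only [eq_comm]

lemma revProd_coeff_one (t : Finset ι) : (revProd ρ t).coeff 1 = ∑ i ∈ t, ρ i := by
  simp [revProd_coeff, Finset.powersetCard_one]

lemma revProd_insert_coeff_succ [DecidableEq ι] {k : ι} {u : Finset ι} (hk : k ∉ u) (j : ℕ) :
    (revProd ρ (insert k u)).coeff (j + 1) =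
      (revProd ρ u).coeff (j + 1) + ρ k * (revProd ρ u).coeff j := by
  rw [revProd, Finset.prod_insert hk, ← revProd, add_mul, one_mul, mul_assoc, Polynomial.coeff_add,
    Polynomial.coeff_C_mul, Polynomial.coeff_X_mul]

lemma revProd_eq_of_card_eq_three {t : Finset ι} (ht : t.card = 3) :
    revProd ρ t = 1 + .C ((revProd ρ t).coeff 1) * .X + .C ((revProd ρ t).coeff 2) * .X ^ 2
      + .C ((revProd ρ t).coeff 3) * .X ^ 3 := by
  conv_lhs =>
    rw [(revProd ρ t).as_sum_range' 4 (by have := revProd_natDegree_le ρ t; omega)]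
  simp [Finset.sum_range_succ, revProd_coeff_zero, ← Polynomial.C_mul_X_pow_eq_monomial]

end RootProducts

section Triples

variable {N : ℕ} {K : Type*}

section CommRing

variable [CommRing K] (ρ : Fin (N + 3) → K)

/-- Generating function `A` of the first coefficients of the pair attached to three of the `N + 3`
roots: it is chosen together with `tripleB` so that `A - z² B` is the product over all roots. -/
noncomputable def tripleA (t : Finset (Fin (N + 3))) : Polynomial K :=
  (1 + .C ((revProd ρ t).coeff 1) * .X) * revProd ρ tᶜ

/-- Generating function of the second coefficients of the pair attached to three of the `N + 3`
roots. -/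
noncomputable def tripleB (t : Finset (Fin (N + 3))) : Polynomial K :=
  -((.C ((revProd ρ t).coeff 2) + .C ((revProd ρ t).coeff 3) * .X) * revProd ρ tᶜ)

variable {t : Finset (Fin (N + 3))}

lemma tripleA_eq_add (ht : t.card = 3) :
    tripleA ρ t = revProd ρ Finset.univ + .X ^ 2 * tripleB ρ t := by
  have h : revProd ρ Finset.univ = revProd ρ t * revProd ρ tᶜ :=
    (Finset.prod_mul_prod_compl t _).symm
  rw [h, revProd_eq_of_card_eq_three ρ ht, tripleA, tripleB]
  ring

lemma revProd_compl_natDegree_le (ht : t.card = 3) : (revProd ρ tᶜ).natDegree ≤ N := by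
  refine (revProd_natDegree_le ρ _).trans ?_
  rw [Finset.card_compl, Fintype.card_fin, ht, Nat.add_sub_cancel]

lemma tripleA_natDegree_le (ht : t.card = 3) : (tripleA ρ t).natDegree ≤ N + 1 := by
  rw [tripleA, add_comm N 1]
  refine Polynomial.natDegree_mul_le_of_le ?_ (revProd_compl_natDegree_le ρ ht)
  compute_degree

lemma tripleB_natDegree_le (ht : t.card = 3) : (tripleB ρ t).natDegree ≤ N + 1 := by
  rw [tripleB, Polynomial.natDegree_neg, add_comm N 1]
  refine Polynomial.natDegree_mul_le_of_le ?_ (revProd_compl_natDegree_le ρ ht)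
  compute_degree

lemma tripleB_coeff_of_le (ht : t.card = 3) {j : ℕ} (hj : N ≤ j) :
    (tripleB ρ t).coeff j = -(revProd ρ Finset.univ).coeff (j + 2) := by
  have h := congrArg (Polynomial.coeff · (j + 2)) (tripleA_eq_add ρ ht)
  simp only [Polynomial.coeff_add, Polynomial.coeff_X_pow_mul] at h
  rw [Polynomial.coeff_eq_zero_of_natDegree_lt
    ((tripleA_natDegree_le ρ ht).trans_lt (by omega))] at h
  linear_combination -h

end CommRing

variable [Field K] {ρ : Fin (N + 3) → K} {t : Finset (Fin (N + 3))} {k : Fin (N + 3)}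

lemma tripleB_eval_eq_zero (h0 : ∀ i, ρ i ≠ 0) (hk : k ∉ t) :
    (tripleB ρ t).eval (-(ρ k)⁻¹) = 0 := by
  have : (revProd ρ tᶜ).eval (-(ρ k)⁻¹) = 0 := by
    rw [revProd, Polynomial.eval_prod]
    exact Finset.prod_eq_zero (Finset.mem_compl.2 hk) (by simp [h0 k])
  simp [tripleB, this]

lemma revProd_eval_ne_zero (hinj : Function.Injective ρ) (h0 : ∀ i, ρ i ≠ 0) (hk : k ∉ t) :
    (revProd ρ t).eval (-(ρ k)⁻¹) ≠ 0 := by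
  rw [revProd, Polynomial.eval_prod]
  refine Finset.prod_ne_zero_iff.2 fun i hi h => hk ?_
  have hik : ρ k = ρ i := by
    have := h0 k
    simp only [Polynomial.eval_add, Polynomial.eval_one, Polynomial.eval_mul, Polynomial.eval_C,
      Polynomial.eval_X] at h
    field_simp at h
    linear_combination h
  exact hinj hik ▸ hi

lemma revProd_coeff_two_sub_coeff_three_div (h0 : ∀ i, ρ i ≠ 0) (ht : t.card = 3) (hk : k ∈ t) :
    (revProd ρ t).coeff 2 - (revProd ρ t).coeff 3 / ρ k = ρ k * ∑ i ∈ t.erase k, ρ i := by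
  have hcard : (t.erase k).card = 2 := by rw [Finset.card_erase_of_mem hk, ht]
  have hthree : (revProd ρ (t.erase k)).coeff 3 = 0 :=
    Polynomial.coeff_eq_zero_of_natDegree_lt
      ((revProd_natDegree_le ρ _).trans_lt (by omega))
  have hcoeff (j : ℕ) := revProd_insert_coeff_succ ρ (Finset.notMem_erase k t) j
  rw [Finset.insert_erase hk] at hcoeff
  rw [hcoeff 1, hcoeff 2, hthree, zero_add, mul_div_cancel_left₀ _ (h0 k), add_sub_cancel_left,
    revProd_coeff_one]

lemma tripleB_eval_ne_zero (hinj : Function.Injective ρ) (h0 : ∀ i, ρ i ≠ 0)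
    (hadd : ∀ i j, i ≠ j → ρ i + ρ j ≠ 0) (ht : t.card = 3) (hk : k ∈ t) :
    (tripleB ρ t).eval (-(ρ k)⁻¹) ≠ 0 := by
  have hsum : ∑ i ∈ t.erase k, ρ i ≠ 0 := by
    obtain ⟨l, m, hlm, h⟩ := Finset.card_eq_two.1
      (show (t.erase k).card = 2 by rw [Finset.card_erase_of_mem hk, ht])
    rw [h, Finset.sum_pair hlm]
    exact hadd l m hlm
  have heval : (tripleB ρ t).eval (-(ρ k)⁻¹) =
      -(ρ k * (∑ i ∈ t.erase k, ρ i) * (revProd ρ tᶜ).eval (-(ρ k)⁻¹)) := by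
    rw [← revProd_coeff_two_sub_coeff_three_div h0 ht hk, tripleB]
    simp only [Polynomial.eval_neg, Polynomial.eval_mul, Polynomial.eval_add, Polynomial.eval_C,
      Polynomial.eval_X]
    ring
  rw [heval]
  exact neg_ne_zero.2 (mul_ne_zero (mul_ne_zero (h0 k) hsum)
    (revProd_eval_ne_zero hinj h0 (by simpa using hk)))

lemma submodule_pow_eq_top_of_separating {ι : Type*} {r : ℕ} [Finite ι]
    {V : Submodule K ({t : Finset ι // t.card = r} → K)}
    {c : ι → {t : Finset ι // t.card = r} → K} (hc : ∀ k, c k ∈ V)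
    (hzero : ∀ k t, k ∉ t.1 → c k t = 0) (hne : ∀ k t, k ∈ t.1 → c k t ≠ 0) : V ^ r = ⊤ := by
  classical
  have := Fintype.ofFinite ι
  have hsingle (t : {t : Finset ι // t.card = r}) : Pi.single t 1 ∈ V ^ r := by
    have hprod : ∏ k ∈ t.1, c k ∈ V ^ r := by
      have := multiset_prod_map_mem_pow_card hc t.1.val
      rwa [Finset.card_val, t.2] at this
    convert Submodule.smul_mem _ (∏ k ∈ t.1, c k t)⁻¹ hprod using 1
    funext t'
    rw [Pi.smul_apply, Finset.prod_apply, smul_eq_mul]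
    rcases eq_or_ne t' t with rfl | htt
    · rw [Pi.single_eq_same,
        inv_mul_cancel₀ (Finset.prod_ne_zero_iff.2 fun k hk => hne k t' hk)]
    · obtain ⟨k, hk, hk'⟩ : ∃ k ∈ t.1, k ∉ t'.1 := by
        by_contra! hsub
        exact htt (Subtype.ext (Finset.eq_of_subset_of_card_le hsub (by rw [t.2, t'.2])).symm)
      rw [Pi.single_eq_of_ne htt, Finset.prod_eq_zero (f := (c · t')) hk (hzero k t' hk'),
        mul_zero]
  rw [eq_top_iff]
  intro f _
  rw [pi_eq_sum_univ' f]
  exact sum_mem fun t _ => Submodule.smul_mem _ _ (hsingle t)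

/-- Coordinates `b₀, …, b_(N-1)` of the pairs attached to the triples of roots, as functions on the
set of triples. -/
noncomputable def tripleCoord (ρ : Fin (N + 3) → K) (j : Fin N)
    (t : {t : Finset (Fin (N + 3)) // t.card = 3}) : K :=
  (tripleB ρ t.1).coeff j

lemma tripleB_eval_mem_span (ρ : Fin (N + 3) → K) (z : K) :
    (fun t : {t : Finset (Fin (N + 3)) // t.card = 3} => (tripleB ρ t.1).eval z) ∈
      Submodule.span K (Set.range fun o : Option (Fin N) => o.elim 1 (tripleCoord ρ)) := by
  have heval : (fun t : {t : Finset (Fin (N + 3)) // t.card = 3} => (tripleB ρ t.1).eval z) =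
      ∑ j : Fin N, z ^ (j : ℕ) • tripleCoord ρ j +
        (-(revProd ρ Finset.univ).coeff (N + 2) * z ^ N
          - (revProd ρ Finset.univ).coeff (N + 3) * z ^ (N + 1)) • 1 := by
    funext t
    rw [Polynomial.eval_eq_sum_range' (n := N + 2)
      ((tripleB_natDegree_le ρ t.2).trans_lt (by omega)), Finset.sum_range_succ,
      Finset.sum_range_succ, tripleB_coeff_of_le ρ t.2 le_rfl,
      tripleB_coeff_of_le ρ t.2 (Nat.le_succ N), Finset.sum_range]
    simp only [tripleCoord, Pi.add_apply, Finset.sum_apply, Pi.smul_apply, smul_eq_mul,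
      Pi.one_apply, mul_one, mul_comm (Polynomial.coeff _ _)]
    ring
  rw [heval]
  exact add_mem (sum_mem fun j _ => Submodule.smul_mem _ _ (Submodule.subset_span ⟨some j, rfl⟩))
    (Submodule.smul_mem _ _ (Submodule.subset_span ⟨none, rfl⟩))

theorem linearIndependent_symProd_tripleCoord (hinj : Function.Injective ρ) (h0 : ∀ i, ρ i ≠ 0)
    (hadd : ∀ i j, i ≠ j → ρ i + ρ j ≠ 0) :
    LinearIndependent K fun s : Sym (Option (Fin N)) 3 =>
      symProd (fun o : Option (Fin N) => o.elim 1 (tripleCoord ρ)) s := by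
  classical
  have htop := submodule_pow_eq_top_of_separating
    (fun k => tripleB_eval_mem_span ρ (-(ρ k)⁻¹)) (fun _ _ => tripleB_eval_eq_zero h0)
    fun _ t => tripleB_eval_ne_zero hinj h0 hadd t.2
  rw [span_range_pow] at htop
  refine linearIndependent_of_top_le_span_of_card_eq_finrank htop.ge ?_
  simp [Module.finrank_fintype_fun_eq_card, Sym.card_sym_eq_choose]

end Triples

section Window

variable {A B : Type*} [CommRing A] [CommRing B] [Algebra A B]

/-- The two-sided sequence with `b c, …, b (c + M - 1)` at the positions `c + 2, …, c + M + 1` and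
zeros elsewhere. The shift by two is that of the second form against the first in the Hankel
matrix to which the matrix of the four derivatives is congruent. -/
def window (b : ℕ → B) (c M : ℕ) (i : ℤ) : B :=
  if c + 2 ≤ i ∧ i < c + M + 2 then b (i - 2).toNat else 0

lemma window_of_mem {b : ℕ → B} {c M : ℕ} {i : ℤ} (hi : c + 2 ≤ i ∧ i < c + M + 2) :
    window b c M i = b (i - 2).toNat :=
  if_pos hi

lemma window_of_notMem {b : ℕ → B} {c M : ℕ} {i : ℤ}
    (hi : ¬ (c + 2 ≤ i ∧ i < c + M + 2)) : window b c M i = 0 :=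
  if_neg hi

lemma window_add_natCast_add_two (b : ℕ → B) {c M j : ℕ} (hj : j < M) :
    window b c M (j + c + 2) = b (j + c) := by
  rw [window_of_mem ⟨by omega, by omega⟩]
  congr 1
  omega

lemma window_mem {σ : Type*} [SetLike σ B] [ZeroMemClass σ B] {S : σ} {b : ℕ → B} {c M : ℕ}
    (h : ∀ j < M, b (j + c) ∈ S) (i : ℤ) : window b c M i ∈ S := by
  by_cases hi : c + 2 ≤ i ∧ i < c + M + 2
  · rw [window_of_mem hi]
    convert h (i - 2 - c).toNat (by omega) using 2
    omega
  · rw [window_of_notMem hi]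
    exact zero_mem S

/-- The submatrix with rows `e` and columns `s` of the matrix with rows `(x 0 j)`, `(x 0 (j + 1))`,
`(x 1 j)`, `(x 1 (j + 1))` attached to a pair `x` of coefficient sequences. -/
def derivMatrix (x : Fin 2 → ℕ → B) {m n : ℕ} (e : Fin m → Fin 4) (s : Fin n → ℕ) :
    Matrix (Fin m) (Fin n) B :=
  .of fun i j => x ⟨e i / 2, by omega⟩ (s j + e i % 2)

lemma map_det_derivMatrix {C F : Type*} [CommRing C] [FunLike F B C] [RingHomClass F B C] (f : F)
    (x : Fin 2 → ℕ → B) {n : ℕ} (e : Fin n → Fin 4) (s : Fin n → ℕ) :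
    f (derivMatrix x e s).det = (derivMatrix (fun r i => f (x r i)) e s).det :=
  RingHom.map_det (f : B →+* C) _

omit [CommRing B] in
lemma derivMatrix_congr {x y : Fin 2 → ℕ → B} {m n k : ℕ} (h : ∀ r, ∀ i ≤ k, x r i = y r i)
    (e : Fin m → Fin 4) {s : Fin n → ℕ} (hs : ∀ j, s j < k) :
    derivMatrix x e s = derivMatrix y e s := by
  ext i j
  exact h _ _ (by have := hs j; omega)

/-- Modulo scalars, the pair `x` of sequences of length `N + 4` consists of two successive pieces
of the window of its second sequence. -/
def IsWindowed (A : Type*) {B : Type*} [CommRing A] [CommRing B] [Algebra A B] (N : ℕ)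
    (x : Fin 2 → ℕ → B) (c M : ℕ) : Prop :=
  ∀ r : Fin 2, ∀ i ≤ N + 3, x r i - window (x 1) c M (i + 2 * r : ℕ) ∈ (1 : Submodule A B)

variable {N : ℕ} {x : Fin 2 → ℕ → B} {c M : ℕ}

lemma IsWindowed.adjoin_eq_top (h : IsWindowed A N x c M)
    (hgen : Algebra.adjoin A {y | ∃ r, ∃ i ≤ N + 3, x r i = y} = ⊤) :
    Algebra.adjoin A (Set.range fun j : Fin M => x 1 (j + c)) = ⊤ := by
  rw [eq_top_iff, ← hgen, Algebra.adjoin_le_iff]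
  rintro _ ⟨r, i, hi, rfl⟩
  obtain ⟨y, hy⟩ := Submodule.mem_one.1 (h r i hi)
  rw [← sub_add_cancel (x r i) (window (x 1) c M (i + 2 * r : ℕ)), ← hy]
  exact add_mem (algebraMap_mem _ y) (window_mem
    (S := Algebra.adjoin A (Set.range fun j : Fin M => x 1 (j + c)))
    (fun j hj => Algebra.subset_adjoin ⟨⟨j, hj⟩, rfl⟩) _)

lemma IsWindowed.derivMatrix_sub_window_mem (h : IsWindowed A N x c M) {m n : ℕ}
    {e : Fin m → Fin 4} {s : Fin n → ℕ} (i : Fin m) {j : Fin n} (hs : s j < N + 3) :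
    derivMatrix x e s i j - window (x 1) c M (s j + e i : ℕ) ∈ (1 : Submodule A B) := by
  have hentry := h ⟨e i / 2, by omega⟩ (s j + e i % 2) (by omega)
  rwa [show s j + e i % 2 + 2 * (e i / 2 : ℕ) = s j + e i by omega] at hentry

lemma one_sup_span_pow_eq_top_of_derivMatrix_det_eq_zero {n m : ℕ} (h : IsWindowed A N x c M)
    (hgen : Algebra.adjoin A {y | ∃ r, ∃ i ≤ N + 3, x r i = y} = ⊤)
    (hminor : ∀ ν : Multiset ℤ, ν.card = m + 1 → (∀ y ∈ ν, y ∈ Set.Ico (c + 2 : ℤ) (c + M + 2)) →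
      ∃ μ : Fin (n + 1) → ℤ, Monotone μ ∧ Finset.univ.val.map μ ≤ ν ∧
        ∃ (o : ℕ) (e : Fin (n + 1) → Fin 4), (∀ i, (e i : ℕ) = o + i) ∧
          (∀ j, (o + n : ℤ) ≤ μ j ∧ μ j < N + 3 + o) ∧
          ∀ s : Fin (n + 1) → ℕ, (∀ j, s j < N + 3) → (derivMatrix x e s).det = 0) :
    (1 ⊔ Submodule.span A (Set.range fun j : Fin M => x 1 (j + c))) ^ m = ⊤ := by
  refine one_sup_span_range_pow_eq_top (h.adjoin_eq_top hgen) fun ν hν => ?_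
  set V := (1 : Submodule A B) ⊔ Submodule.span A (Set.range fun j : Fin M => x 1 (j + c))
  have hη : ∀ i, window (x 1) c M i ∈ V :=
    window_mem fun j hj => Submodule.mem_sup_right (Submodule.subset_span ⟨⟨j, hj⟩, rfl⟩)
  have hmono := multiset_prod_mem_pow_of_hankel_minors (n := n) (m := m) (V := V) le_sup_left hη
    (lo := c + 2) (hi := c + M + 1)
    (fun i hi => window_of_notMem fun hi' => hi ⟨hi'.1, by have := hi'.2; omega⟩)
    (fun ν hν hmem => ?_) (ν := ν.map fun j : Fin M => (j + c + 2 : ℤ)) (by simpa using hν)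
  · rw [Multiset.map_map] at hmono
    convert hmono using 2
    exact Multiset.map_congr rfl fun j _ => (window_add_natCast_add_two _ j.isLt).symm
  · obtain ⟨μ, hμ, hle, o, e, he, hbound, hdet⟩ := hminor ν hν fun y hy =>
      ⟨(hmem y hy).1, by have := (hmem y hy).2; omega⟩
    have hlt (j : Fin (n + 1)) : (μ j + (j : ℕ) - (o + n)).toNat < N + 3 := by
      have := hbound j
      omega
    refine ⟨μ, hμ, hle, (derivMatrix x e fun j => (μ j + (j : ℕ) - (o + n)).toNat).submatrix
      Fin.revPerm id, ?_, fun i j => ?_⟩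
    · rw [Matrix.det_permute, hdet _ hlt, mul_zero]
    · have hi := he (Fin.revPerm i)
      rw [Fin.revPerm_apply, Fin.val_rev] at hi
      have := hbound j
      rw [show μ j + (j : ℕ) - (i : ℕ) =
        ((μ j + (j : ℕ) - (o + n)).toNat + e (Fin.revPerm i) : ℕ) by
          rw [Fin.revPerm_apply, hi]; omega]
      exact h.derivMatrix_sub_window_mem (s := fun j => (μ j + (j : ℕ) - (o + n)).toNat) _ (hlt j)

lemma exists_monotone_map_eq {α : Type*} [LinearOrder α] (ν : Multiset α) {k : ℕ}
    (hν : ν.card = k) : ∃ μ : Fin k → α, Monotone μ ∧ Finset.univ.val.map μ = ν := by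
  obtain ⟨l, hl, rfl⟩ : ∃ l : List α, l.Pairwise (· ≤ ·) ∧ (l : Multiset α) = ν :=
    ⟨ν.sort (· ≤ ·), Multiset.pairwise_sort _ _, Multiset.sort_eq _ _⟩
  obtain rfl : l.length = k := by simpa using hν
  refine ⟨l.get, fun i j hij => hl.rel_get_of_le hij, ?_⟩
  rw [Fin.univ_val_map, List.ofFn_get]

lemma exists_monotone_map_le_of_filter {α : Type*} [LinearOrder α] {p : α → Prop} [DecidablePred p]
    {ν : Multiset α} {k : ℕ} (hν : k ≤ (ν.filter p).card) :
    ∃ μ : Fin k → α, Monotone μ ∧ Finset.univ.val.map μ ≤ ν ∧ ∀ j, p (μ j) := by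
  obtain ⟨t, ht⟩ := Multiset.card_pos_iff_exists_mem.1
    ((Nat.choose_pos hν).trans_eq (Multiset.card_powersetCard k (ν.filter p)).symm)
  obtain ⟨ht, hcard⟩ := Multiset.mem_powersetCard.1 ht
  obtain ⟨μ, hmono, rfl⟩ := exists_monotone_map_eq t hcard
  exact ⟨μ, hmono, ht.trans (Multiset.filter_le _ _), fun j => (Multiset.mem_filter.1
    (Multiset.subset_of_le ht (Multiset.mem_map_of_mem μ (Finset.mem_univ j)))).2⟩

lemma one_sup_span_pow_three_eq_top (h : IsWindowed A N x 1 N)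
    (hgen : Algebra.adjoin A {y | ∃ r, ∃ i ≤ N + 3, x r i = y} = ⊤)
    (hdet : ∀ s : Fin 4 → ℕ, (∀ j, s j < N + 3) → (derivMatrix x id s).det = 0) :
    (1 ⊔ Submodule.span A (Set.range fun j : Fin N => x 1 (j + 1))) ^ 3 = ⊤ := by
  refine one_sup_span_pow_eq_top_of_derivMatrix_det_eq_zero (n := 3) h hgen fun ν hν hmem => ?_
  obtain ⟨μ, hmono, rfl⟩ := exists_monotone_map_eq ν hν
  refine ⟨μ, hmono, le_rfl, 0, id, by simp, fun j => ?_, hdet⟩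
  have := Set.mem_Ico.1 (hmem _ (Multiset.mem_map_of_mem μ (Finset.mem_univ j)))
  push_cast at this ⊢
  omega

lemma one_sup_span_pow_four_eq_top (h : IsWindowed A N x 0 (N + 2))
    (hgen : Algebra.adjoin A {y | ∃ r, ∃ i ≤ N + 3, x r i = y} = ⊤)
    (hdet : ∀ s : Fin 3 → ℕ, (∀ j, s j < N + 3) → (derivMatrix x Fin.castSucc s).det = 0)
    (hdet' : ∀ s : Fin 3 → ℕ, (∀ j, s j < N + 3) → (derivMatrix x Fin.succ s).det = 0) :
    (1 ⊔ Submodule.span A (Set.range fun j : Fin (N + 2) => x 1 j)) ^ 4 = ⊤ := by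
  refine one_sup_span_pow_eq_top_of_derivMatrix_det_eq_zero (n := 2) (c := 0) h hgen
    fun ν hν hmem => ?_
  have hIco {μ : Fin 3 → ℤ} (hle : Finset.univ.val.map μ ≤ ν) (j : Fin 3) :
      2 ≤ μ j ∧ μ j < N + 4 := by
    have := Set.mem_Ico.1
      (hmem _ (Multiset.subset_of_le hle (Multiset.mem_map_of_mem μ (Finset.mem_univ j))))
    push_cast at this
    omega
  have hcard := congrArg Multiset.card (Multiset.filter_add_not (· < (N + 3 : ℤ)) ν)
  rw [Multiset.card_add, hν] at hcard
  rcases le_or_gt 3 (ν.filter (· < (N + 3 : ℤ))).card with hlow | hlow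
  · obtain ⟨μ, hmono, hle, hμ⟩ := exists_monotone_map_le_of_filter (k := 3)
      (p := (· < (N + 3 : ℤ))) hlow
    refine ⟨μ, hmono, hle, 0, Fin.castSucc, by simp, fun j => ?_, hdet⟩
    have := hIco hle j
    have := hμ j
    push_cast
    omega
  · obtain ⟨μ, hmono, hle, hμ⟩ := exists_monotone_map_le_of_filter (k := 3)
      (p := fun y => ¬ y < (N + 3 : ℤ)) (ν := ν) (by omega)
    refine ⟨μ, hmono, hle, 1, Fin.succ, by simp [add_comm], fun j => ?_, hdet'⟩
    have := hIco hle j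
    have := hμ j
    push_cast
    omega

end Window

section Params

variable {B : Type*} [CommRing B] {N : ℕ}

/-- The coordinates `a (N + 3), b 0, a 0, a 1, b (N + 3)` and `a (j + 2) - b j` for `j < N + 3` of
the pair `(a, b) = (x 0, x 1)`. -/
def params (N : ℕ) (x : Fin 2 → ℕ → B) : Fin (N + 8) → B :=
  Matrix.vecCons (x 0 (N + 3)) <| Matrix.vecCons (x 1 0) <| Matrix.vecCons (x 0 0) <|
    Matrix.vecCons (x 0 1) <| Matrix.vecCons (x 1 (N + 3))
      fun j : Fin (N + 3) => x 0 (j + 2) - x 1 j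

lemma comp_params {C F : Type*} [CommRing C] [FunLike F B C] [RingHomClass F B C] (f : F)
    (x : Fin 2 → ℕ → B) : f ∘ params N x = params N fun r i => f (x r i) := by
  funext i
  iterate 5 refine Fin.cases (by simp [params]) (fun i => ?_) i
  simp [params]

lemma params_congr {x y : Fin 2 → ℕ → B} (h : ∀ r, ∀ i ≤ N + 3, x r i = y r i)
    (h' : x 0 (N + 4) = y 0 (N + 4)) : params N x = params N y := by
  have h₀ (i : ℕ) (hi : i ≤ N + 4) : x 0 i = y 0 i := by
    obtain hi | rfl := Nat.le_succ_iff.1 hi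
    exacts [h 0 i hi, h']
  funext i
  iterate 5 refine Fin.cases (h _ _ (by omega)) (fun i => ?_) i
  exact congrArg₂ (· - ·) (h₀ _ (by omega)) (h _ _ (by omega))

variable {A : Type*} [CommRing A] [Algebra A B] {x : Fin 2 → ℕ → B}

lemma isWindowed_of_params_mem (hx : x 0 (N + 4) = 0)
    (h : ∀ i, Fin.tail (Fin.tail (params N x)) i ∈ (1 : Submodule A B)) :
    IsWindowed A N x 0 (N + 2) := by
  have hsub (j : Fin (N + 3)) : x 0 (j + 2) - x 1 j ∈ (1 : Submodule A B) := h j.succ.succ.succ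
  have hwin (j : ℕ) (hj : j < N + 2) : window (x 1) 0 (N + 2) (j + 2 : ℕ) = x 1 j := by
    simpa using window_add_natCast_add_two (c := 0) (x 1) hj
  have hout {i : ℕ} (hi : i < 2 ∨ N + 4 ≤ i) : window (x 1) 0 (N + 2) i = 0 :=
    window_of_notMem (by push_cast; omega)
  refine Fin.forall_fin_two.2 ⟨fun i hi => ?_, fun i hi => ?_⟩
  · rcases i with _ | _ | i
    · rw [hout (by simp), sub_zero]
      exact h 0
    · rw [hout (by simp), sub_zero]
      exact h 1
    · exact hwin i (by omega) ▸ hsub ⟨i, by omega⟩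
  · rcases lt_or_ge i (N + 2) with hi' | hi'
    · change x 1 i - window (x 1) 0 (N + 2) (i + 2 : ℕ) ∈ _
      rw [hwin i hi', sub_self]
      exact zero_mem _
    · rw [hout (by simp; omega), sub_zero]
      obtain rfl | rfl : i = N + 2 ∨ i = N + 3 := by omega
      · simpa [hx] using hsub ⟨N + 2, by omega⟩
      · exact h 2

lemma window_sub_window_mem {b : ℕ → B} {M : Submodule A B} (h0 : b 0 ∈ M) (h1 : b (N + 1) ∈ M)
    (i : ℤ) : window b 0 (N + 2) i - window b 1 N i ∈ M := by
  unfold window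
  push_cast
  split_ifs with h h' h'
  · simp
  · obtain rfl | rfl : i = 2 ∨ i = N + 3 := by omega
    · simpa using h0
    · simpa [show ((N : ℤ) + 3 - 2).toNat = N + 1 by omega] using h1
  · omega
  · simp

lemma isWindowed_one_of_params_mem (hx : x 0 (N + 4) = 0)
    (h : ∀ i, params N x i ∈ (1 : Submodule A B)) : IsWindowed A N x 1 N := by
  have hwin := isWindowed_of_params_mem hx fun i => h i.succ.succ
  have hlast : x 1 (N + 1) ∈ (1 : Submodule A B) := by
    have hsub : x 0 (N + 3) - x 1 (N + 1) ∈ (1 : Submodule A B) :=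
      h (Fin.succ (Fin.succ (Fin.succ (Fin.succ (Fin.succ ⟨N + 1, by omega⟩)))))
    simpa using sub_mem (show x 0 (N + 3) ∈ _ from h 0) hsub
  intro r i hi
  simpa using add_mem (hwin r i hi) (window_sub_window_mem (h 1) hlast (i + 2 * r : ℕ))

end Params

section CoordRing

/-- The coordinate ring of `W'_d` for `d = N + 4`. -/
def CoordRing (N : ℕ) : Type := MvPolynomial (Fin 2 × Fin (N + 4)) ℂ ⧸ minorsIdeal (N + 4)

namespace CoordRing

variable (N : ℕ)

noncomputable instance : CommRing (CoordRing N) :=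
  inferInstanceAs (CommRing (MvPolynomial (Fin 2 × Fin (N + 4)) ℂ ⧸ minorsIdeal (N + 4)))

noncomputable instance : Algebra ℂ (CoordRing N) :=
  inferInstanceAs (Algebra ℂ (MvPolynomial (Fin 2 × Fin (N + 4)) ℂ ⧸ minorsIdeal (N + 4)))

/-- The restriction of polynomial functions to `W'_d`. -/
noncomputable def mk : MvPolynomial (Fin 2 × Fin (N + 4)) ℂ →ₐ[ℂ] CoordRing N :=
  Ideal.Quotient.mkₐ ℂ (minorsIdeal (N + 4))

lemma mk_surjective : Function.Surjective (mk N) :=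
  Ideal.Quotient.mk_surjective

/-- The coefficients `a i = coord N 0 i` and `b i = coord N 1 i` of the universal pair on `W'_d`,
extended by zero to all natural numbers `i`. -/
noncomputable def coord (r : Fin 2) (i : ℕ) : CoordRing N :=
  if h : i < N + 4 then mk N (X (r, ⟨i, h⟩)) else 0

variable {N}

lemma coord_val (r : Fin 2) (i : Fin (N + 4)) : coord N r i = mk N (X (r, i)) :=
  dif_pos i.isLt

lemma coord_of_le (r : Fin 2) {i : ℕ} (hi : N + 4 ≤ i) : coord N r i = 0 :=
  dif_neg (by omega)

lemma map_det_submatrix_genMat {B F : Type*} [CommRing B]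
    [FunLike F (MvPolynomial (Fin 2 × Fin (N + 4)) ℂ) B]
    [RingHomClass F (MvPolynomial (Fin 2 × Fin (N + 4)) ℂ) B] (f : F) {x : Fin 2 → ℕ → B}
    (hx : ∀ r (i : Fin (N + 4)), f (X (r, i)) = x r i) (s : Fin 4 → Fin (N + 3)) :
    f ((genMat (N + 4)).submatrix id s).det = (derivMatrix x id fun j => s j).det := by
  refine (RingHom.map_det (f : MvPolynomial (Fin 2 × Fin (N + 4)) ℂ →+* B) _).trans ?_
  congr 1
  ext r j
  exact hx _ _

lemma det_derivMatrix_coord {s : Fin 4 → ℕ} (hs : ∀ j, s j < N + 3) :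
    (derivMatrix (coord N) id s).det = 0 := by
  rw [← map_det_submatrix_genMat (mk N) (fun r i => (coord_val r i).symm) fun j => ⟨s j, hs j⟩]
  exact Ideal.Quotient.eq_zero_iff_mem.2 (Ideal.subset_span ⟨_, rfl⟩)

variable {B : Type*} [CommRing B] [Algebra ℂ B]

/-- The morphism to `W'_d` given by a pair of coefficient sequences with vanishing minors. -/
noncomputable def lift (x : Fin 2 → ℕ → B)
    (h : ∀ s : Fin 4 → ℕ, (∀ j, s j < N + 3) → (derivMatrix x id s).det = 0) :
    CoordRing N →ₐ[ℂ] B :=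
  Ideal.Quotient.liftₐ (minorsIdeal (N + 4)) (aeval fun q => x q.1 q.2) <| by
    suffices minorsIdeal (N + 4) ≤ RingHom.ker (aeval fun q => x q.1 q.2) from fun p hp => this hp
    rw [minorsIdeal, Ideal.span_le]
    rintro _ ⟨s, rfl⟩
    rw [SetLike.mem_coe, RingHom.mem_ker, map_det_submatrix_genMat (x := x) _ fun r i => aeval_X ..]
    exact h _ fun j => (s j).isLt

lemma lift_coord {x : Fin 2 → ℕ → B}
    (h : ∀ s : Fin 4 → ℕ, (∀ j, s j < N + 3) → (derivMatrix x id s).det = 0) (r : Fin 2) {i : ℕ}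
    (hi : i ≤ N + 3) : lift x h (coord N r i) = x r i := by
  rw [coord, dif_pos (Nat.lt_succ_of_le hi)]
  exact aeval_X (fun q : Fin 2 × Fin (N + 4) => x q.1 q.2) _

lemma algHom_ext {f g : CoordRing N →ₐ[ℂ] B}
    (h : ∀ r, ∀ i ≤ N + 3, f (coord N r i) = g (coord N r i)) : f = g := by
  refine AlgHom.cancel_right (mk_surjective N) |>.1 (MvPolynomial.algHom_ext fun q => ?_)
  have := h q.1 q.2 (by omega)
  rwa [coord_val] at this

lemma adjoin_coord_eq_top {A : Type*} [CommRing A] [Algebra ℂ A] [Algebra A B] [IsScalarTower ℂ A B]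
    {f : CoordRing N →ₐ[ℂ] B} (hf : Function.Surjective f) :
    Algebra.adjoin A {y | ∃ r, ∃ i ≤ N + 3, f (coord N r i) = y} = ⊤ := by
  refine Algebra.eq_top_iff.2 fun y => ?_
  obtain ⟨p, rfl⟩ := (hf.comp (mk_surjective N)) y
  induction p using MvPolynomial.induction_on with
  | C c =>
    rw [← algebraMap_eq, Function.comp_apply, AlgHom.commutes, AlgHom.commutes,
      IsScalarTower.algebraMap_apply ℂ A B]
    exact algebraMap_mem _ _
  | add p q hp hq =>
    simp only [Function.comp_apply, map_add] at hp hq ⊢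
    exact add_mem hp hq
  | mul_X p q hp =>
    simp only [Function.comp_apply, map_mul] at hp ⊢
    rw [← coord_val]
    exact mul_mem hp (Algebra.subset_adjoin ⟨q.1, q.2, by omega, rfl⟩)

end CoordRing

end CoordRing

section Chart

variable {B : Type*} [CommRing B] {N : ℕ}

lemma det_smul_eq_vecMul_adjugate {n : Type*} [Fintype n] [DecidableEq n] {M : Matrix n n B}
    {c w : n → B} (h : Matrix.vecMul c M = w) : M.det • c = Matrix.vecMul w M.adjugate := by
  rw [← h, Matrix.vecMul_vecMul, Matrix.mul_adjugate, Matrix.vecMul_smul, Matrix.vecMul_one]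

/-- The sequence `b` with `b 0 = b₀` satisfying the linear relation
`c 0 * a i + c 1 * a (i + 1) + c 2 * b i + b (i + 1) = 0`. -/
def relatedSeq (a : ℕ → B) (b₀ : B) (c : Fin 3 → B) : ℕ → B
  | 0 => b₀
  | i + 1 => -(c 0 * a i + c 1 * a (i + 1) + c 2 * relatedSeq a b₀ c i)

/-- The pair of sequences whose derivatives satisfy a prescribed linear relation: the chart
coordinates `Sum.inl` are the first sequence and the `Sum.inr` are the first term of the second
sequence, followed by the coefficients of the relation. -/
def chartPair (g : Fin (N + 4) ⊕ Fin 4 → B) : Fin 2 → ℕ → B :=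
  let a : ℕ → B := fun i => if h : i < N + 4 then g (.inl ⟨i, h⟩) else 0
  ![a, relatedSeq a (g (.inr 0)) fun i => g (.inr i.succ)]

lemma map_relatedSeq {C F : Type*} [CommRing C] [FunLike F B C] [RingHomClass F B C] (f : F)
    (a : ℕ → B) (b₀ : B) (c : Fin 3 → B) (i : ℕ) :
    f (relatedSeq a b₀ c i) = relatedSeq (fun i => f (a i)) (f b₀) (fun i => f (c i)) i := by
  induction i with
  | zero => rfl
  | succ i ih => simp [relatedSeq, ih]

lemma chartPair_zero_val (g : Fin (N + 4) ⊕ Fin 4 → B) (i : Fin (N + 4)) :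
    chartPair g 0 i = g (.inl i) :=
  dif_pos i.isLt

lemma chartPair_zero_of_le (g : Fin (N + 4) ⊕ Fin 4 → B) {i : ℕ} (hi : N + 4 ≤ i) :
    chartPair g 0 i = 0 :=
  dif_neg (by omega)

lemma chartPair_one (g : Fin (N + 4) ⊕ Fin 4 → B) :
    chartPair g 1 = relatedSeq (chartPair g 0) (g (.inr 0)) fun i => g (.inr i.succ) :=
  rfl

lemma map_chartPair {C F : Type*} [CommRing C] [FunLike F B C] [RingHomClass F B C] (f : F)
    (g : Fin (N + 4) ⊕ Fin 4 → B) (r : Fin 2) (i : ℕ) :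
    f (chartPair g r i) = chartPair (fun q => f (g q)) r i := by
  have ha (i : ℕ) : f (chartPair g 0 i) = chartPair (fun q => f (g q)) 0 i := by
    simp only [chartPair, Matrix.cons_val_zero, apply_dite f, map_zero]
  revert r
  refine Fin.forall_fin_two.2 ⟨ha i, ?_⟩
  rw [chartPair_one, chartPair_one, map_relatedSeq, funext ha]

lemma vecMul_derivMatrix_chartPair (g : Fin (N + 4) ⊕ Fin 4 → B) {n : ℕ} (s : Fin n → ℕ) :
    Matrix.vecMul (fun i => g (.inr i.succ)) (derivMatrix (chartPair g) Fin.castSucc s) =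
      fun j => -chartPair g 1 (s j + 1) := by
  funext j
  simp only [Matrix.vecMul, dotProduct, Fin.sum_univ_three, chartPair_one, relatedSeq, neg_neg]
  rfl

lemma det_derivMatrix_chartPair (g : Fin (N + 4) ⊕ Fin 4 → B) (s : Fin 4 → ℕ) :
    (derivMatrix (chartPair g) id s).det = 0 := by
  have hrel : Matrix.vecMul (Fin.snoc (fun i => g (.inr i.succ)) 1)
      (derivMatrix (chartPair g) id s) = 0 := by
    funext j
    have := congrFun (vecMul_derivMatrix_chartPair g s) j
    rw [Matrix.vecMul, dotProduct] at this ⊢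
    simp only [Fin.sum_univ_castSucc (n := 3), Fin.snoc_castSucc, Fin.snoc_last, one_mul]
    exact (congrArg (· + _) this).trans (neg_add_cancel _)
  have hdet := congrFun (det_smul_eq_vecMul_adjugate hrel) (Fin.last 3)
  rwa [Pi.smul_apply, Fin.snoc_last, smul_eq_mul, mul_one, Matrix.zero_vecMul] at hdet

/-- The coordinate ring of the affine space of pairs with a prescribed relation. -/
abbrev ChartRing (N : ℕ) : Type := MvPolynomial (Fin (N + 4) ⊕ Fin 4) ℂ

/-- The chart of `W'_d` given by a relation in which the last derivative has coefficient one. -/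
noncomputable def CoordRing.chart (N : ℕ) : CoordRing N →ₐ[ℂ] ChartRing N :=
  lift (chartPair X) fun s _ => det_derivMatrix_chartPair X s

lemma CoordRing.chart_coord (r : Fin 2) {i : ℕ} (hi : i ≤ N + 3) :
    chart N (coord N r i) = chartPair X r i :=
  lift_coord _ r hi

lemma CoordRing.chart_comp_params :
    chart N ∘ params N (coord N) = params N (chartPair (X : _ → ChartRing N)) := by
  rw [comp_params]
  refine params_congr (fun r i hi => chart_coord r hi) ?_
  rw [coord_of_le 0 le_rfl, map_zero, chartPair_zero_of_le _ le_rfl]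

end Chart

section TripleChart

variable {N : ℕ} {K : Type*} [Field K] (ρ : Fin (N + 3) → K) {t : Finset (Fin (N + 3))}

/-- The chart coordinates of the pair attached to a set of three roots. -/
noncomputable def tripleChart (t : Finset (Fin (N + 3))) : Fin (N + 4) ⊕ Fin 4 → K :=
  Sum.elim (fun i => (Polynomial.X * tripleA ρ t).coeff i)
    ![0, (revProd ρ t).coeff 3, (revProd ρ t).coeff 2, (revProd ρ t).coeff 1]

lemma chartPair_tripleChart_zero (ht : t.card = 3) (i : ℕ) :
    chartPair (tripleChart ρ t) 0 i = (Polynomial.X * tripleA ρ t).coeff i := by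
  rcases lt_or_ge i (N + 4) with hi | hi
  · exact chartPair_zero_val (tripleChart ρ t) ⟨i, hi⟩
  · rw [chartPair_zero_of_le _ hi, Polynomial.coeff_eq_zero_of_natDegree_lt]
    exact (Polynomial.natDegree_mul_le_of_le Polynomial.natDegree_X_le
      (tripleA_natDegree_le ρ ht)).trans_lt (by omega)

lemma chartPair_tripleChart_one (ht : t.card = 3) (i : ℕ) :
    chartPair (tripleChart ρ t) 1 i = (Polynomial.X * tripleB ρ t).coeff i := by
  rw [chartPair_one, funext (chartPair_tripleChart_zero ρ ht)]
  induction i with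
  | zero => simp [relatedSeq, tripleChart]
  | succ i ih =>
    have hrel : (Polynomial.C ((revProd ρ t).coeff 3) * Polynomial.X +
        Polynomial.C ((revProd ρ t).coeff 2)) * (Polynomial.X * tripleA ρ t) +
        (Polynomial.C ((revProd ρ t).coeff 1) * Polynomial.X + 1) *
          (Polynomial.X * tripleB ρ t) = 0 := by
      simp only [tripleA, tripleB]
      ring
    have hcoeff := congrArg (Polynomial.coeff · (i + 1)) hrel
    simp only [add_mul, mul_assoc, Polynomial.coeff_add, Polynomial.coeff_C_mul,
      Polynomial.coeff_X_mul, one_mul, Polynomial.coeff_zero] at hcoeff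
    rw [relatedSeq, ih]
    simp only [tripleChart, Sum.elim_inr, Matrix.cons_val_succ, Matrix.cons_val,
      Polynomial.coeff_X_mul]
    linear_combination -hcoeff

lemma tail_params_tripleChart (ht : t.card = 3) (j : Fin (N + 3)) :
    params N (chartPair (tripleChart ρ t)) j.succ.succ.succ.succ.succ =
      (revProd ρ Finset.univ).coeff (j + 1) := by
  change chartPair _ 0 (j + 2) - chartPair _ 1 j = _
  rw [chartPair_tripleChart_zero ρ ht, chartPair_tripleChart_one ρ ht, tripleA_eq_add ρ ht,
    Polynomial.coeff_X_mul, Polynomial.coeff_add]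
  rcases (j : ℕ) with _ | i
  · simp [Polynomial.coeff_X_pow_mul']
  · simp [Polynomial.coeff_X_pow_mul']

end TripleChart

section Substitution

variable {k σ : Type*} [CommRing k] [DecidableEq σ]

/-- The substitution of the constant `r` for the variable `v`. -/
noncomputable def substVar (v : σ) (r : k) : MvPolynomial σ k →ₐ[k] MvPolynomial σ k :=
  aeval (Function.update X v (C r))

@[simp]
lemma substVar_X_self (v : σ) (r : k) : substVar v r (X v) = C r := by
  simp [substVar]

lemma substVar_X_of_ne {v w : σ} (h : w ≠ v) (r : k) : substVar v r (X w) = X w := by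
  simp [substVar, h]

lemma algHom_substVar {T : Type*} [CommRing T] [Algebra k T] {φ : MvPolynomial σ k →ₐ[k] T}
    {v : σ} {r : k} (h : φ (X v) = algebraMap k T r) (p : MvPolynomial σ k) :
    φ (substVar v r p) = φ p := by
  suffices φ.comp (substVar v r) = φ from DFunLike.congr_fun this p
  refine MvPolynomial.algHom_ext fun w => ?_
  rcases eq_or_ne w v with rfl | hw
  · rw [AlgHom.comp_apply, substVar_X_self, ← algebraMap_eq, φ.commutes, h]
  · rw [AlgHom.comp_apply, substVar_X_of_ne hw]

lemma PolyIndependent.of_substVar [IsDomain k] {ι : Type*} [Fintype ι] {n : ℕ}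
    {x : Fin (n + 1) → MvPolynomial σ k} {e : ι → MvPolynomial σ k} {v : σ} (hx : x 0 = X v) (r : k)
    (h : PolyIndependent k (substVar v r ∘ Fin.tail x) (substVar v r ∘ e)) :
    PolyIndependent k x e := by
  refine .of_specialization r (mem_nonZeroDivisors_of_ne_zero fun h0 => ?_) (substVar v r) ?_ h
  · have := congrArg (eval fun _ => r + 1) h0
    simp [hx, algebraMap_eq] at this
  · rw [hx, substVar_X_self, algebraMap_eq]

end Substitution

section Independence

lemma PolyIndependent.of_linearIndependent {k K T ι : Type*} [CommRing k] [CommRing K] [CommRing T]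
    [Algebra k K] [Algebra K T] [Algebra k T] [IsScalarTower k K T] [Fintype ι] {n : ℕ}
    {c : Fin n → K} (hc : AlgebraicIndependent k c) {e : ι → T} (he : LinearIndependent K e) :
    PolyIndependent k (fun j => algebraMap K T (c j)) e := by
  intro f hf
  funext i
  refine hc.eq_zero_of_aeval_eq_zero _
    (Fintype.linearIndependent_iff.1 he (fun i => aeval c (f i)) ?_ i)
  rw [← hf]
  refine Finset.sum_congr rfl fun i _ => ?_
  rw [Algebra.smul_def, ← aeval_algebraMap_apply]
  rfl

/-- The monomials of degree at most three in the terms `1, …, N` of the second sequence. -/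
def coordMonomials {B : Type*} [CommRing B] (N : ℕ) (x : Fin 2 → ℕ → B) :
    Sym (Option (Fin N)) 3 → B :=
  symProd fun o => o.elim 1 fun j : Fin N => x 1 (j + 1)

lemma comp_coordMonomials {B C F : Type*} [CommRing B] [CommRing C] [FunLike F B C]
    [RingHomClass F B C] (f : F) (N : ℕ) (x : Fin 2 → ℕ → B) :
    f ∘ coordMonomials N x = coordMonomials N fun r i => f (x r i) := by
  funext s
  refine (map_symProd f _ s).trans (congrArg (symProd · s) ?_)
  funext o
  cases o <;> simp

variable (N : ℕ)

/-- The field of rational functions in the `N + 3` generic roots. -/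
abbrev RootField : Type := FractionRing (MvPolynomial (Fin (N + 3)) ℂ)

/-- The generic roots. -/
noncomputable def genericRoot (i : Fin (N + 3)) : RootField N :=
  algebraMap (MvPolynomial (Fin (N + 3)) ℂ) _ (X i)

/-- The evaluation of functions on the chart at the pairs attached to the three-element subsets of
the generic roots. -/
noncomputable def tripleEval :
    ChartRing N →ₐ[ℂ] {t : Finset (Fin (N + 3)) // t.card = 3} → RootField N :=
  AlgHom.pi fun t => aeval (tripleChart (genericRoot N) t.1)

lemma linearIndependent_symProd_genericRoot :
    LinearIndependent (RootField N) fun s : Sym (Option (Fin N)) 3 =>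
      symProd (fun o : Option (Fin N) => o.elim 1 (tripleCoord (genericRoot N))) s := by
  have hinj : Function.Injective (algebraMap (MvPolynomial (Fin (N + 3)) ℂ) (RootField N)) :=
    IsFractionRing.injective _ _
  refine linearIndependent_symProd_tripleCoord (hinj.comp X_injective)
    (fun i => (map_ne_zero_iff _ hinj).2 (X_ne_zero i)) fun i j hij h => ?_
  rw [genericRoot, genericRoot, ← map_add, map_eq_zero_iff _ hinj] at h
  simpa [hij.symm] using congrArg (eval fun l => if l = i then (1 : ℂ) else 0) h

lemma algebraicIndependent_revProd_coeff :
    AlgebraicIndependent ℂ fun j : Fin (N + 3) =>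
      (revProd (genericRoot N) Finset.univ).coeff (j + 1) := by
  have hcoeff (j : ℕ) : (revProd (genericRoot N) Finset.univ).coeff j =
      algebraMap _ _ (esymm (Fin (N + 3)) ℂ j) := by
    simp only [revProd_coeff, esymm, map_sum, map_prod, genericRoot]
  simp only [hcoeff]
  have hesymm : AlgebraicIndependent ℂ fun j : Fin (N + 3) => esymm (Fin (N + 3)) ℂ (j + 1) := by
    rw [algebraicIndependent_iff_injective_aeval]
    convert Subtype.val_injective.comp (esymmAlgHom_fin_injective ℂ (le_refl (N + 3))) using 1
    exact funext fun p => (esymmAlgHom_apply p).symm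
  exact hesymm.map' (f := IsScalarTower.toAlgHom ℂ _ (RootField N)) (IsFractionRing.injective _ _)

variable {N}

lemma tripleEval_chartPair (r : Fin 2) (i : ℕ) (t : {t : Finset (Fin (N + 3)) // t.card = 3}) :
    tripleEval N (chartPair X r i) t = chartPair (tripleChart (genericRoot N) t.1) r i :=
  (map_chartPair (aeval (R := ℂ) (tripleChart (genericRoot N) t.1)) X r i).trans (by simp)

lemma tripleEval_comp_coordMonomials :
    tripleEval N ∘ coordMonomials N (chartPair X) =
      symProd fun o : Option (Fin N) => o.elim 1 (tripleCoord (genericRoot N)) := by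
  rw [comp_coordMonomials, coordMonomials]
  congr! 4 with o j
  funext t
  rw [tripleEval_chartPair, chartPair_tripleChart_one _ t.2, Polynomial.coeff_X_mul]
  rfl

lemma tripleEval_params (j : Fin (N + 3)) :
    tripleEval N (params N (chartPair X) j.succ.succ.succ.succ.succ) =
      algebraMap (RootField N) _ ((revProd (genericRoot N) Finset.univ).coeff (j + 1)) := by
  funext t
  refine Eq.trans ?_ (tail_params_tripleChart (genericRoot N) t.2 j)
  change tripleEval N (chartPair X 0 (j + 2) - chartPair X 1 j) t = _
  rw [map_sub, Pi.sub_apply, tripleEval_chartPair, tripleEval_chartPair]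
  rfl

lemma polyIndependent_tripleEval :
    PolyIndependent ℂ
      (fun j : Fin (N + 3) => tripleEval N (params N (chartPair X) j.succ.succ.succ.succ.succ))
      (tripleEval N ∘ coordMonomials N (chartPair X)) := by
  rw [tripleEval_comp_coordMonomials]
  simp only [tripleEval_params]
  exact .of_linearIndependent (algebraicIndependent_revProd_coeff N)
    (linearIndependent_symProd_genericRoot N)

/-- The substitutions `a (N + 3) = 0`, `b 0 = 0`, `a 0 = 0` and `a 1 = 1`, which hold for the pairs
attached to three-element sets of roots. -/
noncomputable def normalizeChart (N : ℕ) : ChartRing N →ₐ[ℂ] ChartRing N :=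
  (substVar (.inl 1) 1).comp <| (substVar (.inl 0) 0).comp <| (substVar (.inr 0) 0).comp <|
    substVar (.inl (Fin.last (N + 3))) 0

/-- The points of the chart at which the substitutions `normalizeChart` hold. -/
def IsNormalized {T : Type*} [CommRing T] [Algebra ℂ T] (φ : ChartRing N →ₐ[ℂ] T) : Prop :=
  φ (X (.inl (Fin.last (N + 3)))) = 0 ∧ φ (X (.inr 0)) = 0 ∧ φ (X (.inl 0)) = 0 ∧
    φ (X (.inl 1)) = 1

lemma IsNormalized.apply_normalizeChart {T : Type*} [CommRing T] [Algebra ℂ T]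
    {φ : ChartRing N →ₐ[ℂ] T} (h : IsNormalized φ) (p : ChartRing N) :
    φ (normalizeChart N p) = φ p := by
  obtain ⟨h₁, h₂, h₃, h₄⟩ := h
  simp only [normalizeChart, AlgHom.comp_apply]
  rw [algHom_substVar (by simpa using h₄), algHom_substVar (by simpa using h₃),
    algHom_substVar (by simpa using h₂), algHom_substVar (by simpa using h₁)]

lemma isNormalized_tripleEval : IsNormalized (tripleEval N) := by
  have hX (q : Fin (N + 4) ⊕ Fin 4) :
      tripleEval N (X q) = fun t => tripleChart (genericRoot N) t.1 q :=
    funext fun t => aeval_X _ _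
  refine ⟨?_, ?_, ?_, ?_⟩ <;> rw [hX] <;> funext t
  · exact Polynomial.coeff_X_mul _ (N + 2) |>.trans <| Polynomial.coeff_eq_zero_of_natDegree_lt <|
      (tripleA_natDegree_le _ t.2).trans_lt (by omega)
  · simp [tripleChart]
  · simp [tripleChart]
  · simp [tripleChart, tripleA, Polynomial.mul_coeff_zero, revProd_coeff_zero]

lemma exists_isNormalized_chartPair_one_ne_zero (N : ℕ) :
    ∃ φ : ChartRing N →ₐ[ℂ] ℂ, IsNormalized φ ∧ φ (chartPair X 1 (N + 3)) ≠ 0 := by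
  refine ⟨aeval (Sum.elim (fun i => if i = 1 ∨ i = ⟨N + 2, by omega⟩ then 1 else 0) ![0, 1, 0, 0]),
    by simp [IsNormalized, Fin.ext_iff], ?_⟩
  rw [map_chartPair]
  simp [chartPair, relatedSeq]

lemma PolyIndependent.of_normalizeChart
    (h : PolyIndependent ℂ
      (fun i => normalizeChart N
        (params N (chartPair X) (Fin.succ (Fin.succ (Fin.succ (Fin.succ i))))))
      (normalizeChart N ∘ coordMonomials N (chartPair X))) :
    PolyIndependent ℂ (params N (chartPair (X : _ → ChartRing N)))
      (coordMonomials N (chartPair X)) := by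
  refine .of_substVar (v := .inl (Fin.last (N + 3))) (chartPair_zero_val _ (Fin.last (N + 3))) 0 <|
    .of_substVar (v := .inr 0) (substVar_X_of_ne (by simp) _) 0 <|
    .of_substVar (v := .inl 0) ?_ 0 <| .of_substVar (v := .inl 1) ?_ 1 ?_
  · change substVar _ _ (substVar _ _ (chartPair X 0 (0 : Fin (N + 4)))) = _
    rw [chartPair_zero_val, substVar_X_of_ne (by simp [Fin.ext_iff]), substVar_X_of_ne (by simp)]
  · change substVar _ _ (substVar _ _ (substVar _ _ (chartPair X 0 (1 : Fin (N + 4))))) = _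
    rw [chartPair_zero_val, substVar_X_of_ne (by simp [Fin.ext_iff]), substVar_X_of_ne (by simp),
      substVar_X_of_ne (by simp)]
  · exact h

theorem polyIndependent_coordMonomials_chartPair :
    PolyIndependent ℂ (params N (chartPair (X : _ → ChartRing N)))
      (coordMonomials N (chartPair X)) := by
  have htriple := (isNormalized_tripleEval (N := N)).apply_normalizeChart
  refine .of_normalizeChart <| .of_specialization 0
    (mem_nonZeroDivisors_of_ne_zero fun h0 => ?_) (tripleEval N) ?_ ?_
  · obtain ⟨φ, hφ, hne⟩ := exists_isNormalized_chartPair_one_ne_zero N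
    rw [map_zero, sub_zero] at h0
    exact hne ((hφ.apply_normalizeChart _).symm.trans ((congrArg φ h0).trans (map_zero φ)))
  · refine (htriple (chartPair X 1 (N + 3))).trans (funext fun t => ?_)
    rw [tripleEval_chartPair, chartPair_tripleChart_one _ t.2, Polynomial.coeff_X_mul, map_zero]
    exact Polynomial.coeff_eq_zero_of_natDegree_lt
      ((tripleB_natDegree_le (genericRoot N) t.2).trans_lt (show N + 1 < N + 2 by omega))
  · convert polyIndependent_tripleEval using 1
    · exact funext fun j => htriple _
    · exact funext fun s => htriple _

end Independence

section Freeness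

lemma PolyIndependent.injective_of_span_eq_top {k S T ι : Type*} [CommRing k] [CommRing S]
    [CommRing T] [Algebra k S] [Algebra k T] [Fintype ι] {n : ℕ}
    [Algebra (MvPolynomial (Fin n) k) S] [IsScalarTower k (MvPolynomial (Fin n) k) S]
    {f : S →ₐ[k] T} {e : ι → S}
    (h : PolyIndependent k (fun i => f (algebraMap (MvPolynomial (Fin n) k) S (X i))) (f ∘ e))
    (he : Submodule.span (MvPolynomial (Fin n) k) (Set.range e) = ⊤) :
    Function.Injective f ∧ LinearIndependent (MvPolynomial (Fin n) k) e := by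
  have hcoeff (c : ι → MvPolynomial (Fin n) k) (hc : f (∑ i, c i • e i) = 0) : c = 0 := by
    refine h c (Eq.trans ?_ hc)
    rw [map_sum]
    refine Finset.sum_congr rfl fun i _ => ?_
    rw [Algebra.smul_def, map_mul]
    congr 1
    exact DFunLike.congr_fun (MvPolynomial.algHom_ext (f := aeval _)
      (g := f.comp (IsScalarTower.toAlgHom k _ S)) fun i => aeval_X _ i) (c i)
  refine ⟨(injective_iff_map_eq_zero f).2 fun y hy => ?_,
    Fintype.linearIndependent_iff.2 fun c hc i => ?_⟩
  · obtain ⟨c, rfl⟩ := (Submodule.mem_span_range_iff_exists_fun _).1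
      (he ▸ Submodule.mem_top (x := y))
    simp [hcoeff c hy]
  · rw [hcoeff c (by rw [hc, map_zero]), Pi.zero_apply]

/-- The coordinate ring of the affine space of parameters. -/
abbrev ParamRing (N : ℕ) : Type := MvPolynomial (Fin (N + 8)) ℂ

namespace CoordRing

variable (N : ℕ)

noncomputable instance : Algebra (ParamRing N) (CoordRing N) :=
  (aeval (params N (coord N))).toAlgebra

instance : IsScalarTower ℂ (ParamRing N) (CoordRing N) :=
  .of_algHom (aeval (params N (coord N)))

lemma algebraMap_X (i : Fin (N + 8)) :
    algebraMap (ParamRing N) (CoordRing N) (X i) = params N (coord N) i :=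
  aeval_X _ i

lemma span_coordMonomials_eq_top :
    Submodule.span (ParamRing N) (Set.range (coordMonomials N (coord N))) = ⊤ := by
  have hwin : IsWindowed (ParamRing N) N (coord N) 1 N :=
    isWindowed_one_of_params_mem (coord_of_le 0 le_rfl) fun i =>
      Submodule.mem_one.2 ⟨X i, algebraMap_X N i⟩
  rw [coordMonomials, ← span_range_pow, span_range_option_elim_one]
  exact one_sup_span_pow_three_eq_top hwin
    (adjoin_coord_eq_top (f := .id ℂ _) Function.surjective_id)
    fun s hs => det_derivMatrix_coord hs

lemma injective_chart_and_linearIndependent :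
    Function.Injective (chart N) ∧
      LinearIndependent (ParamRing N) (coordMonomials N (coord N)) := by
  refine PolyIndependent.injective_of_span_eq_top ?_ (span_coordMonomials_eq_top N)
  convert polyIndependent_coordMonomials_chartPair (N := N) using 1
  · simp only [algebraMap_X]
    exact chart_comp_params
  · rw [comp_coordMonomials, coordMonomials, coordMonomials]
    congr! 4 with o j
    exact chart_coord 1 (by omega)

instance : IsDomain (CoordRing N) :=
  (injective_chart_and_linearIndependent N).1.isDomain (chart N : CoordRing N →+* ChartRing N)

/-- The coordinate ring is free over the ring of parameters. -/
noncomputable def basis : Module.Basis (Sym (Option (Fin N)) 3) (ParamRing N) (CoordRing N) :=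
  .mk (injective_chart_and_linearIndependent N).2 (span_coordMonomials_eq_top N).ge

instance : Module.Free (ParamRing N) (CoordRing N) := .of_basis (basis N)

instance : Module.Finite (ParamRing N) (CoordRing N) := .of_basis (basis N)

end CoordRing

end Freeness

section CohenMacaulay

/-- The algebra endomorphism of a polynomial ring which evaluates the variables in `s` at `x`. -/
noncomputable def evalOn {σ k : Type*} [CommRing k] (x : σ → k) (s : Set σ) :
    MvPolynomial σ k →ₐ[k] MvPolynomial σ k :=
  open Classical in aeval fun i => if i ∈ s then C (x i) else X i

section PolynomialRing

variable {σ k : Type*} [CommRing k] (x : σ → k) {s : Set σ} {i : σ}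

lemma evalOn_X_of_mem (hi : i ∈ s) : evalOn x s (X i) = C (x i) := by
  rw [evalOn, aeval_X, if_pos hi]

lemma evalOn_X_of_notMem (hi : i ∉ s) : evalOn x s (X i) = X i := by
  rw [evalOn, aeval_X, if_neg hi]

lemma ker_evalOn (s : Set σ) :
    RingHom.ker (evalOn x s) = Ideal.span ((fun i => X i - C (x i)) '' s) := by
  set I := Ideal.span ((fun i => X i - C (x i)) '' s)
  refine le_antisymm (fun p hp => ?_) (Ideal.span_le.2 ?_)
  · have hmk : (Ideal.Quotient.mkₐ k I).comp (evalOn x s) = Ideal.Quotient.mkₐ k I := by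
      refine MvPolynomial.algHom_ext fun i => ?_
      by_cases hi : i ∈ s
      · rw [AlgHom.comp_apply, evalOn_X_of_mem x hi]
        exact (Ideal.Quotient.eq.2 (Ideal.subset_span ⟨i, hi, rfl⟩ : X i - C (x i) ∈ I)).symm
      · rw [AlgHom.comp_apply, evalOn_X_of_notMem x hi]
    have h := DFunLike.congr_fun hmk p
    rw [AlgHom.comp_apply, RingHom.mem_ker.1 hp, map_zero] at h
    exact Ideal.Quotient.eq_zero_iff_mem.1 h.symm
  · rintro _ ⟨i, hi, rfl⟩
    simp [evalOn_X_of_mem x hi]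

lemma isWeaklyRegular_X_sub_C [IsDomain k] {l : List σ} (hl : l.Nodup) :
    RingTheory.Sequence.IsWeaklyRegular (MvPolynomial σ k) (l.map fun i => X i - C (x i)) := by
  refine ⟨fun n hn => ?_⟩
  rw [List.length_map] at hn
  have hideal : (Ideal.ofList ((l.map fun i => X i - C (x i)).take n) • ⊤ :
      Submodule (MvPolynomial σ k) (MvPolynomial σ k)) =
        RingHom.ker (evalOn x {i | i ∈ l.take n}) := by
    rw [smul_eq_mul, Ideal.mul_top, ← List.map_take, Ideal.ofList, ker_evalOn]
    simp only [List.mem_map, Set.image, Set.mem_ofPred_eq]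
  have hnotMem : l[n] ∉ {i | i ∈ l.take n} := fun h => by
    obtain ⟨m, hm, he⟩ := List.mem_take_iff_getElem.1 h
    have := hl.getElem_inj_iff.1 he
    omega
  have hne : (X l[n] - C (x l[n]) : MvPolynomial σ k) ≠ 0 := fun h => by
    simpa using congrArg (eval (Function.const σ (x l[n] + 1))) h
  rw [List.getElem_map, isSMulRegular_iff_right_eq_zero_of_smul]
  intro q
  obtain ⟨q, rfl⟩ := Submodule.mkQ_surjective _ q
  rw [← map_smul, Submodule.mkQ_apply, Submodule.mkQ_apply, Submodule.Quotient.mk_eq_zero,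
    Submodule.Quotient.mk_eq_zero, hideal, RingHom.mem_ker, RingHom.mem_ker, smul_eq_mul, map_mul,
    map_sub, evalOn_X_of_notMem x hnotMem, algHom_C, algebraMap_eq]
  exact fun h => (mul_eq_zero.1 h).resolve_left hne

end PolynomialRing

lemma ringKrullDim_le_of_isIntegral (A S : Type*) [CommRing A] [CommRing S] [Algebra A S]
    [Algebra.IsIntegral A S] : ringKrullDim S ≤ ringKrullDim A :=
  Order.krullDim_le_of_strictMono (PrimeSpectrum.comap (algebraMap A S))
    fun _ _ hpq => Ideal.IsIntegral.comap_lt_comap hpq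

section Free

variable (k σ : Type*) {S : Type*} [Field k] [Fintype σ] [CommRing S]
  [Algebra (MvPolynomial σ k) S] [Module.Finite (MvPolynomial σ k) S]

include k in
variable (S) in
lemma ringKrullDim_le_card : ringKrullDim S ≤ Fintype.card σ := by
  refine (ringKrullDim_le_of_isIntegral (MvPolynomial σ k) S).trans_eq ?_
  rw [MvPolynomial.ringKrullDim_of_isNoetherianRing, ringKrullDim_eq_zero_of_field, zero_add,
    Nat.card_eq_fintype_card]

include k σ

variable [IsAlgClosed k] [Module.Free (MvPolynomial σ k) S] (P : Ideal S) [P.IsMaximal]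

lemma exists_isRegular_localization :
    ∃ rs : List (Localization P.primeCompl),
      (∀ r ∈ rs, r ∈ IsLocalRing.maximalIdeal (Localization P.primeCompl)) ∧
      RingTheory.Sequence.IsRegular (Localization P.primeCompl) rs ∧
      rs.length = Fintype.card σ := by
  have : (P.comap (algebraMap (MvPolynomial σ k) S)).IsMaximal :=
    Ideal.isMaximal_comap_of_isIntegral_of_isMaximal P
  obtain ⟨x, hx⟩ := isMaximal_iff_eq_vanishingIdeal_singleton.1 this
  have hreg := (isWeaklyRegular_X_sub_C x (Finset.nodup_toList Finset.univ)).of_flat (S := S)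
  have hmem : ∀ r ∈ (Finset.univ.toList.map fun i => X i - C (x i)).map
      (algebraMap (MvPolynomial σ k) S), r ∈ P := by
    simp only [List.mem_map]
    rintro _ ⟨_, ⟨i, -, rfl⟩, rfl⟩
    rw [← Ideal.mem_comap, hx, mem_vanishingIdeal_singleton_iff]
    simp
  refine ⟨_, ?_, hreg.isRegular_of_isLocalization_of_mem (Localization P.primeCompl) P hmem,
    by simp⟩
  simp only [List.mem_map (f := algebraMap S (Localization P.primeCompl))]
  rintro _ ⟨y, hy, rfl⟩
  exact (IsLocalization.AtPrime.to_map_mem_maximal_iff _ P y).2 (hmem y hy)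

lemma ringKrullDim_localization_eq_card :
    ringKrullDim (Localization P.primeCompl) = Fintype.card σ := by
  have := IsNoetherianRing.of_finite (MvPolynomial σ k) S
  refine le_antisymm ?_ ?_
  · rw [IsLocalization.AtPrime.ringKrullDim_eq_height P]
    exact Ideal.height_le_ringKrullDim_of_isPrime.trans (ringKrullDim_le_card k σ S)
  · obtain ⟨rs, -, hreg, hlen⟩ := exists_isRegular_localization k σ P
    have : Nontrivial (Localization P.primeCompl ⧸ Ideal.ofList rs) :=
      Ideal.Quotient.nontrivial_iff.2 fun h => hreg.top_ne_smul (by rw [h]; simp)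
    rw [← ringKrullDim_add_length_eq_ringKrullDim_of_isRegular rs hreg, hlen]
    exact le_add_of_nonneg_left ringKrullDim_nonneg_of_nontrivial

omit [Fintype σ] in
lemma isCMLocalRing_localization [Finite σ] :
    IsCMLocalRing (Localization P.primeCompl) := by
  have := Fintype.ofFinite σ
  obtain ⟨rs, hmem, hreg, hlen⟩ := exists_isRegular_localization k σ P
  exact ⟨rs, hmem, hreg, by rw [hlen, ringKrullDim_localization_eq_card k σ]; rfl⟩

variable (S) in
lemma ringKrullDim_eq_card [Nontrivial S] :
    ringKrullDim S = Fintype.card σ := by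
  refine le_antisymm (ringKrullDim_le_card k σ S) ?_
  obtain ⟨P, hP⟩ := Ideal.exists_maximal S
  rw [← ringKrullDim_localization_eq_card k σ P, IsLocalization.AtPrime.ringKrullDim_eq_height P]
  exact Ideal.height_le_ringKrullDim_of_isPrime

end Free

namespace CoordRing

variable {N : ℕ}

instance : IsNoetherianRing (CoordRing N) :=
  .of_finite (ParamRing N) _

lemma ringKrullDim_localization (P : Ideal (CoordRing N)) [P.IsMaximal] :
    ringKrullDim (Localization P.primeCompl) = (N + 8 : ℕ) :=
  (ringKrullDim_localization_eq_card ℂ (Fin (N + 8)) P).trans (by simp)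

end CoordRing

end CohenMacaulay

section Denominators

variable {S : Type*} [CommRing S]

/-- A power of `δ` is a denominator of each element of the fraction ring that is integral over
`S`. -/
def ClearsDenominators (δ : S) : Prop :=
  ∀ x : FractionRing S, IsIntegral S x → ∃ m : ℕ, δ ^ m • x ∈ (1 : Submodule S (FractionRing S))

lemma ClearsDenominators.of_mem_span {s : Set S} (h : ∀ δ ∈ s, ClearsDenominators δ) {δ : S}
    (hδ : δ ∈ Ideal.span s) : ClearsDenominators δ := by
  intro x hx
  have hle : Ideal.span s ≤ ((1 : Submodule S (FractionRing S)).colon {x}).radical := by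
    refine Ideal.span_le.2 fun ε hε => ?_
    obtain ⟨m, hm⟩ := h ε hε x hx
    exact ⟨m, Submodule.mem_colon_singleton.2 hm⟩
  obtain ⟨m, hm⟩ := hle hδ
  exact ⟨m, Submodule.mem_colon_singleton.1 hm⟩

lemma ClearsDenominators.of_injective [IsDomain S] {T : Type*} [CommRing T] [IsDomain T]
    [IsIntegrallyClosed T] {f : S →+* T} (hf : Function.Injective f) {δ : S}
    (h : ∀ t, ∃ m : ℕ, f δ ^ m * t ∈ f.range) : ClearsDenominators δ := by
  intro x hx
  let φ : FractionRing S →+* FractionRing T := IsFractionRing.map hf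
  have hφ (y : S) : φ (algebraMap S _ y) = algebraMap T _ (f y) := IsLocalization.map_eq _ y
  obtain ⟨t, ht⟩ := IsIntegrallyClosed.isIntegral_iff.1
    (hx.map_of_comp_eq f φ (RingHom.ext fun y => (hφ y).symm))
  obtain ⟨m, y, hy⟩ := h t
  refine ⟨m, Submodule.mem_one.2 ⟨y, φ.injective ?_⟩⟩
  rw [hφ, hy, Algebra.smul_def, map_mul φ, hφ, ← ht, map_pow, map_mul]

lemma exists_pow_mul_mem_range_of_forall_X {k σ : Type*} [CommRing k] [Algebra k S]
    {f : S →ₐ[k] MvPolynomial σ k} {δ : S} (h : ∀ i, ∃ m : ℕ, f δ ^ m * X i ∈ f.range)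
    (t : MvPolynomial σ k) : ∃ m : ℕ, f δ ^ m * t ∈ f.range := by
  have hpow (m : ℕ) : f δ ^ m ∈ f.range := pow_mem (f.mem_range_self δ) m
  induction t using MvPolynomial.induction_on with
  | C c => exact ⟨0, by simpa [← algebraMap_eq] using f.range.algebraMap_mem c⟩
  | add p q hp hq =>
    obtain ⟨m, hm⟩ := hp
    obtain ⟨n, hn⟩ := hq
    refine ⟨n + m, ?_⟩
    convert add_mem (mul_mem (hpow n) hm) (mul_mem (hpow m) hn) using 1
    ring
  | mul_X p i hp =>
    obtain ⟨m, hm⟩ := hp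
    obtain ⟨n, hn⟩ := h i
    refine ⟨m + n, ?_⟩
    convert mul_mem hm hn using 1
    ring

lemma exists_eq_smul_of_smul_eq_smul {A M : Type*} [CommRing A] [IsDomain A]
    [DecompositionMonoid A] [AddCommGroup M] [Module A M] [Module.Free A M] {p q : A}
    (hpq : IsRelPrime p q) {x y : M} (h : q • x = p • y) : ∃ z, x = p • z := by
  have β := Module.Free.chooseBasis A M
  have hdvd (i) : p ∣ β.repr x i := by
    refine hpq.dvd_of_dvd_mul_left ⟨β.repr y i, ?_⟩
    simpa using congrArg (β.repr · i) h
  choose g hg using hdvd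
  refine ⟨∑ i ∈ (β.repr x).support, g i • β i, ?_⟩
  conv_lhs => rw [← β.linearCombination_repr x, Finsupp.linearCombination_apply, Finsupp.sum]
  simp only [Finset.smul_sum, smul_smul, ← hg]

theorem isIntegrallyClosed_of_isRelPrime_clearsDenominators {A : Type*} [CommRing A] [IsDomain A]
    [DecompositionMonoid A] [IsDomain S] [Algebra A S] [Module.Free A S] {p q : A}
    (hpq : IsRelPrime p q) (hp : ClearsDenominators (algebraMap A S p))
    (hq : ClearsDenominators (algebraMap A S q)) : IsIntegrallyClosed S := by
  wlog hp0 : p ≠ 0 generalizing p q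
  · refine this hpq.symm hq hp fun hq0 => not_isRelPrime_zero_zero (α := A) ?_
    rwa [not_not.1 hp0, hq0] at hpq
  refine (isIntegrallyClosed_iff (FractionRing S)).2 fun {x} hx => ?_
  obtain ⟨m, hm⟩ := hp x hx
  obtain ⟨n, hn⟩ := hq x hx
  obtain ⟨y, hy⟩ := Submodule.mem_one.1 hm
  obtain ⟨w, hw⟩ := Submodule.mem_one.1 hn
  have hyw : q ^ n • y = p ^ m • w := by
    apply IsFractionRing.injective S (FractionRing S)
    simp only [Algebra.smul_def, map_mul, map_pow, hy, hw]
    ring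
  obtain ⟨z, rfl⟩ := exists_eq_smul_of_smul_eq_smul hpq.pow hyw
  have hpm : algebraMap S (FractionRing S) (algebraMap A S p ^ m) ≠ 0 := by
    simpa [FaithfulSMul.algebraMap_eq_zero_iff] using fun h => absurd h hp0
  refine ⟨z, mul_left_cancel₀ hpm ?_⟩
  rw [← map_mul, ← Algebra.smul_def _ x, ← hy, Algebra.smul_def, map_pow]

end Denominators

section RelPrime

lemma isRelPrime_C_of_monic {R : Type*} [CommRing R] [IsDomain R] {r : R} (hr : r ≠ 0)
    {q : Polynomial R} (hq : q.Monic) : IsRelPrime (Polynomial.C r) q := by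
  intro d hdr hdq
  have hdeg := Polynomial.natDegree_le_of_dvd hdr (Polynomial.C_ne_zero.2 hr)
  rw [Polynomial.natDegree_C, Nat.le_zero] at hdeg
  rw [Polynomial.eq_C_of_natDegree_eq_zero hdeg] at hdq ⊢
  exact (Polynomial.isPrimitive_iff_isUnit_of_C_dvd.1 hq.isPrimitive _ hdq).map Polynomial.C

lemma exists_isRelPrime_aeval_mem {k S : Type*} [Field k] [CommRing S] [Algebra k S] {n : ℕ}
    (y : Fin (n + 2) → S) {I : Ideal S}
    (h : ((Ideal.Quotient.mk I).comp
      (aeval (R := k) (Fin.tail (Fin.tail y))).toRingHom).IsIntegral) :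
    ∃ p q : MvPolynomial (Fin (n + 2)) k, IsRelPrime p q ∧ aeval y p ∈ I ∧ aeval y q ∈ I := by
  have hmonic (z : S) : ∃ p : Polynomial (MvPolynomial (Fin n) k), p.Monic ∧
      p.eval₂ (aeval (R := k) (Fin.tail (Fin.tail y))).toRingHom z ∈ I := by
    obtain ⟨p, hp, hz⟩ := h (Ideal.Quotient.mk I z)
    rw [← Polynomial.hom_eval₂] at hz
    exact ⟨p, hp, Ideal.Quotient.eq_zero_iff_mem.1 hz⟩
  obtain ⟨p, hp, hpI⟩ := hmonic (y 1)
  obtain ⟨q, hq, hqI⟩ := hmonic (y 0)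
  let e := finSuccEquiv k n
  let e' := finSuccEquiv k (n + 1)
  let ι : MvPolynomial (Fin n) k →ₐ[k] MvPolynomial (Fin (n + 1)) k := rename Fin.succ
  refine ⟨e'.symm (Polynomial.C (e.symm p)), e'.symm (q.map ι.toRingHom), ?_, ?_, ?_⟩
  · refine .of_map e' ?_
    simp only [AlgEquiv.apply_symm_apply]
    exact isRelPrime_C_of_monic ((map_ne_zero_iff _ e.symm.injective).2 hp.ne_zero) (hq.map _)
  · rw [aeval_finSuccEquiv_symm, Polynomial.eval₂_C]
    refine (congrArg (· ∈ I) (aeval_finSuccEquiv_symm (Fin.tail y) p)).mpr hpI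
  · rw [aeval_finSuccEquiv_symm, Polynomial.eval₂_map]
    convert hqI using 2
    exact congrArg AlgHom.toRingHom (MvPolynomial.algHom_ext (f := (aeval (Fin.tail y)).comp ι)
      fun i => by simp [ι, Fin.tail])

end RelPrime

section TripleMinors

namespace CoordRing

variable {N : ℕ}

lemma exists_pow_mul_mem_range_chart {s : Fin 3 → ℕ} (hs : ∀ j, s j < N + 3) (t : ChartRing N) :
    ∃ m : ℕ, chart N (derivMatrix (coord N) Fin.castSucc s).det ^ m * t ∈ (chart N).range := by
  refine exists_pow_mul_mem_range_of_forall_X (fun q => ?_) t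
  have hcoord (r : Fin 2) {i : ℕ} (hi : i ≤ N + 3) : chartPair X r i ∈ (chart N).range :=
    ⟨coord N r i, chart_coord r hi⟩
  have hdet : chart N (derivMatrix (coord N) Fin.castSucc s).det =
      (derivMatrix (chartPair X) Fin.castSucc s).det := by
    rw [map_det_derivMatrix, derivMatrix_congr (fun r i hi => chart_coord r hi) _ hs]
  rcases q with i | i
  · refine ⟨0, ?_⟩
    rw [pow_zero, one_mul, ← chartPair_zero_val X i]
    exact hcoord 0 (by omega)
  · refine Fin.cases ⟨0, ?_⟩ (fun i => ⟨1, ?_⟩) i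
    · rw [pow_zero, one_mul]
      exact hcoord 1 (Nat.zero_le _)
    · have hadj := congrFun (det_smul_eq_vecMul_adjugate
        (vecMul_derivMatrix_chartPair (N := N) (X : _ → ChartRing N) s)) i
      rw [Pi.smul_apply, smul_eq_mul] at hadj
      rw [pow_one, hdet, hadj, Matrix.vecMul, dotProduct]
      refine sum_mem (S := (chart N).range) fun j _ => mul_mem (neg_mem (hcoord 1 (hs j))) ?_
      refine ⟨(derivMatrix (coord N) Fin.castSucc s).adjugate j i, ?_⟩
      rw [← derivMatrix_congr (fun r i hi => chart_coord r hi) _ hs]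
      exact congrFun₂ (AlgHom.map_adjugate (chart N) _) j i

end CoordRing

lemma det_derivMatrix_reverse {B : Type*} [CommRing B] (x : Fin 2 → ℕ → B) {m n : ℕ}
    (e : Fin m → Fin 4) {s : Fin m → ℕ} (hs : ∀ j, s j ≤ n) :
    (derivMatrix (fun r i => x r.rev (n + 1 - i)) e s).det =
      (derivMatrix x (Fin.rev ∘ e ∘ Fin.rev) fun j => n - s j.rev).det := by
  rw [← Matrix.det_submatrix_equiv_self Fin.revPerm]
  congr 1
  ext i j
  have := hs j.rev
  simp only [derivMatrix, Matrix.submatrix_apply, Matrix.of_apply, Fin.revPerm_apply,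
    Function.comp_apply]
  congr 1 <;> grind

namespace CoordRing

/-- The automorphism of `W'_d` that exchanges the two forms and the two variables. -/
noncomputable def reversal (N : ℕ) : CoordRing N →ₐ[ℂ] CoordRing N :=
  lift (fun r i => coord N r.rev (N + 3 - i)) fun s hs => by
    rw [det_derivMatrix_reverse (n := N + 2) _ _ fun j => Nat.le_of_lt_succ (hs j)]
    convert det_derivMatrix_coord (N := N) (s := fun j => N + 2 - s j.rev) fun j => by omega
    exact funext Fin.rev_rev

variable {N : ℕ}

lemma reversal_coord (r : Fin 2) {i : ℕ} (hi : i ≤ N + 3) :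
    reversal N (coord N r i) = coord N r.rev (N + 3 - i) :=
  lift_coord _ r hi

lemma reversal_involutive : Function.Involutive (reversal N) := by
  suffices (reversal N).comp (reversal N) = .id ℂ _ from DFunLike.congr_fun this
  refine algHom_ext fun r i hi => ?_
  rw [AlgHom.comp_apply, reversal_coord r hi, reversal_coord _ (Nat.sub_le _ _), Fin.rev_rev,
    Nat.sub_sub_self hi, AlgHom.id_apply]

lemma reversal_det_derivMatrix_succ {s : Fin 3 → ℕ} (hs : ∀ j, s j < N + 3) :
    reversal N (derivMatrix (coord N) Fin.succ s).det =
      (derivMatrix (coord N) Fin.castSucc fun j => N + 2 - s j.rev).det := by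
  rw [map_det_derivMatrix, derivMatrix_congr (fun r i hi => reversal_coord r hi) _ hs,
    det_derivMatrix_reverse (n := N + 2) _ _ fun j => Nat.le_of_lt_succ (hs j)]
  congr 2
  funext i
  simp [Fin.rev_succ]

/-- The ideal of the pairs of forms with two independent relations between their derivatives,
generated by the minors of the first three and of the last three rows. -/
noncomputable def tripleMinors (N : ℕ) : Ideal (CoordRing N) :=
  Ideal.span {δ | ∃ s : Fin 3 → ℕ, (∀ j, s j < N + 3) ∧
    (δ = (derivMatrix (coord N) Fin.castSucc s).det ∨ δ = (derivMatrix (coord N) Fin.succ s).det)}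

lemma clearsDenominators_of_mem_tripleMinors {δ : CoordRing N} (hδ : δ ∈ tripleMinors N) :
    ClearsDenominators δ := by
  have hchart := (injective_chart_and_linearIndependent N).1
  refine .of_mem_span ?_ hδ
  rintro _ ⟨s, hs, rfl | rfl⟩
  · exact .of_injective (f := (chart N).toRingHom) hchart (exists_pow_mul_mem_range_chart hs)
  · refine .of_injective (f := ((chart N).comp (reversal N)).toRingHom)
      (hchart.comp reversal_involutive.injective) fun t => ?_
    obtain ⟨m, y, hy⟩ := exists_pow_mul_mem_range_chart
      (s := fun j => N + 2 - s j.rev) (fun j => by omega) t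
    refine ⟨m, reversal N y, ?_⟩
    refine (congrArg (chart N) (reversal_involutive y)).trans (hy.trans ?_)
    rw [← reversal_det_derivMatrix_succ hs]
    rfl

lemma isIntegral_quotient_tripleMinors (N : ℕ) :
    ((Ideal.Quotient.mk (tripleMinors N)).comp
      (aeval (R := ℂ) (Fin.tail (Fin.tail (params N (coord N))))).toRingHom).IsIntegral := by
  let π := Ideal.Quotient.mkₐ ℂ (tripleMinors N)
  let φ := π.comp (aeval (Fin.tail (Fin.tail (params N (coord N)))))
  let x (r : Fin 2) (i : ℕ) := π (coord N r i)
  let : Algebra (MvPolynomial (Fin (N + 6)) ℂ) (CoordRing N ⧸ tripleMinors N) := φ.toAlgebra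
  have hwin : IsWindowed (MvPolynomial (Fin (N + 6)) ℂ) N x 0 (N + 2) := by
    refine isWindowed_of_params_mem ?_ fun i => Submodule.mem_one.2 ⟨X i, ?_⟩
    · exact (congrArg π (coord_of_le 0 le_rfl)).trans (map_zero π)
    · exact (congrArg π (aeval_X _ i)).trans (congrFun (comp_params π (coord N)) i.succ.succ)
  have hdet {s : Fin 3 → ℕ} {e : Fin 3 → Fin 4}
      (h : (derivMatrix (coord N) e s).det ∈ tripleMinors N) : (derivMatrix x e s).det = 0 :=
    (map_det_derivMatrix π (coord N) e s).symm.trans (Ideal.Quotient.eq_zero_iff_mem.2 h)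
  have : IsScalarTower ℂ (MvPolynomial (Fin (N + 6)) ℂ) (CoordRing N ⧸ tripleMinors N) :=
    .of_algHom φ
  have htop := one_sup_span_pow_four_eq_top hwin
    (adjoin_coord_eq_top (f := π) Ideal.Quotient.mk_surjective)
    (fun s hs => hdet (Ideal.subset_span ⟨s, hs, .inl rfl⟩))
    fun s hs => hdet (Ideal.subset_span ⟨s, hs, .inr rfl⟩)
  rw [← span_range_option_elim_one] at htop
  have : Module.Finite (MvPolynomial (Fin (N + 6)) ℂ) (CoordRing N ⧸ tripleMinors N) :=
    ⟨htop ▸ .pow (Submodule.fg_span (Set.finite_range _)) 4⟩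
  exact algebraMap_isIntegral_iff.2 inferInstance

instance : IsIntegrallyClosed (CoordRing N) := by
  obtain ⟨p, q, hpq, hp, hq⟩ :=
    exists_isRelPrime_aeval_mem (params N (coord N)) (isIntegral_quotient_tripleMinors N)
  exact isIntegrallyClosed_of_isRelPrime_clearsDenominators hpq
    (clearsDenominators_of_mem_tripleMinors hp) (clearsDenominators_of_mem_tripleMinors hq)

end CoordRing

end TripleMinors

section LocalParameters

variable {S : Type*} [CommRing S] {M : Ideal S}

lemma det_mem_of_column_mem {n : Type*} [Fintype n] [DecidableEq n] {A : Matrix n n S} (j : n)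
    (h : ∀ i, A i j ∈ M) : A.det ∈ M := by
  rw [← Ideal.Quotient.eq_zero_iff_mem, RingHom.map_det]
  exact Matrix.det_eq_zero_of_column_eq_zero j fun i => Ideal.Quotient.eq_zero_iff_mem.2 (h i)

lemma mem_sq_of_det_eq_zero [M.IsMaximal] {n : ℕ} {A : Matrix (Fin (n + 1)) (Fin (n + 1)) S}
    (hA : A.det = 0) {i j : Fin (n + 1)} (hrow : ∀ l, A i l ∈ M) (hcol : ∀ l, A l j ∈ M)
    (hminor : (A.submatrix i.succAbove j.succAbove).det ∉ M) : A i j ∈ M ^ 2 := by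
  have hother (l : Fin n) : (-1) ^ (i + j.succAbove l : ℕ) * A i (j.succAbove l) *
      (A.submatrix i.succAbove (j.succAbove l).succAbove).det ∈ M ^ 2 := by
    obtain ⟨l', hl'⟩ := Fin.exists_succAbove_eq (Fin.succAbove_ne j l).symm
    rw [pow_two, mul_assoc]
    refine Ideal.mul_mem_left _ _
      (Ideal.mul_mem_mul (hrow _) (det_mem_of_column_mem l' fun m => ?_))
    rw [Matrix.submatrix_apply, hl']
    exact hcol _
  have hprod : A i j * (A.submatrix i.succAbove j.succAbove).det ∈ M ^ 2 := by
    rw [Matrix.det_succ_row A i, Fin.sum_univ_succAbove _ j] at hA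
    have hterm := (eq_neg_of_add_eq_zero_left hA).symm ▸ neg_mem (sum_mem fun l _ => hother l)
    rw [mul_assoc] at hterm
    exact (Ideal.unit_mul_mem_iff_mem _ (isUnit_neg_one.pow _)).1 hterm
  obtain ⟨ε, m, hm, hε⟩ := Ideal.IsMaximal.exists_inv ‹_› hminor
  rw [← mul_one (A i j), ← hε, mul_add, mul_left_comm]
  exact add_mem (Ideal.mul_mem_left _ _ hprod) (pow_two M ▸ Ideal.mul_mem_mul (hrow j) hm)

lemma isRegLocalRing_localization [IsNoetherianRing S] [M.IsPrime] {ι : Type*} [Fintype ι]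
    {t : ι → S} (ht : ∀ i, t i ∈ M) (hM : M ≤ Ideal.span (Set.range t) ⊔ M ^ 2)
    (hdim : ringKrullDim (Localization M.primeCompl) = Fintype.card ι) :
    IsRegLocalRing (Localization M.primeCompl) := by
  classical
  let L := Localization M.primeCompl
  have hmax : M.map (algebraMap S L) = IsLocalRing.maximalIdeal L :=
    Localization.AtPrime.map_eq_maximalIdeal
  let T : Finset L := Finset.univ.image fun i => algebraMap S L (t i)
  have hspan : Ideal.span (T : Set L) = (Ideal.span (Set.range t)).map (algebraMap S L) := by
    rw [Ideal.map_span, ← Set.range_comp, Finset.coe_image, Finset.coe_univ, Set.image_univ]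
    rfl
  have hgen : Ideal.span (T : Set L) = IsLocalRing.maximalIdeal L := by
    rw [hspan, ← hmax]
    refine le_antisymm (Ideal.map_mono (Ideal.span_le.2 (Set.range_subset_iff.2 ht))) ?_
    apply Submodule.le_of_le_smul_of_le_jacobson_bot (IsNoetherian.noetherian _)
      (IsLocalRing.jacobson_eq_maximalIdeal (⊥ : Ideal L) bot_ne_top).ge
    rw [← hmax, smul_eq_mul, ← pow_two, ← Ideal.map_pow]
    exact (Ideal.map_mono hM).trans_eq (Ideal.map_sup _ _ _)
  refine ⟨T, hgen, le_antisymm ?_ ?_⟩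
  · rw [hdim]
    exact Nat.cast_le.2 (Finset.card_image_le.trans_eq Finset.card_univ)
  · rw [← IsLocalRing.maximalIdeal_height_eq_ringKrullDim]
    refine WithBot.coe_le_coe.2 (Ideal.height_le_card_of_mem_minimalPrimes_span_finset ?_)
    rw [hgen, Ideal.minimalPrimes_eq_subsingleton_self]
    exact Set.mem_singleton _

lemma ker_eq_span_of_adjoin_eq_top {k : Type*} [CommRing k] [Algebra k S] (f : S →ₐ[k] k)
    {s : Set S} (hs : Algebra.adjoin k s = ⊤) :
    RingHom.ker f = Ideal.span ((fun y => y - algebraMap k S (f y)) '' s) := by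
  set I := Ideal.span ((fun y => y - algebraMap k S (f y)) '' s)
  have hsub (y : S) : y - algebraMap k S (f y) ∈ I := by
    induction (hs ▸ Algebra.mem_top : y ∈ Algebra.adjoin k s) using Algebra.adjoin_induction with
    | mem y hy => exact Ideal.subset_span ⟨y, hy, rfl⟩
    | algebraMap c => simp
    | add y z _ _ hy hz =>
      rw [map_add, map_add, add_sub_add_comm]
      exact add_mem hy hz
    | mul y z _ _ hy hz =>
      convert add_mem (I.mul_mem_right z hy) (I.mul_mem_left (algebraMap k S (f y)) hz) using 1
      rw [map_mul, map_mul]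
      ring
  refine le_antisymm (fun y hy => ?_) (Ideal.span_le.2 ?_)
  · simpa [RingHom.mem_ker.1 hy] using hsub y
  · rintro _ ⟨y, -, rfl⟩
    simp [RingHom.mem_ker]

end LocalParameters

section SpecialPoint

namespace CoordRing

variable {N : ℕ}

/-- The coefficient sequences of the pair `((d - 1)x^(d - 2)y, y^(d - 1))`, for `d = N + 4`. -/
def specialPair (N : ℕ) : Fin 2 → ℕ → ℂ :=
  ![Pi.single 1 1, Pi.single (N + 3) 1]

lemma specialPoint_eq_specialPair (q : Fin 2 × Fin (N + 4)) :
    specialPoint (N + 4) (by omega) q = specialPair N q.1 q.2 := by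
  obtain ⟨r, i⟩ := q
  fin_cases r <;> simp [specialPoint, specialPair, Pi.single_apply, Fin.ext_iff]

/-- The evaluation of functions on `W'_d` at the special point. -/
noncomputable def specialEval (N : ℕ) : CoordRing N →ₐ[ℂ] ℂ :=
  lift (specialPair N) fun s hs => by
    refine Matrix.det_eq_zero_of_row_eq_zero 2 fun j => ?_
    exact Pi.single_eq_of_ne (hs j).ne 1

lemma specialEval_coord (r : Fin 2) {i : ℕ} (hi : i ≤ N + 3) :
    specialEval N (coord N r i) = specialPair N r i :=
  lift_coord _ r hi

/-- The maximal ideal of the special point, as an ideal of `CoordRing N`. -/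
noncomputable def specialIdeal (N : ℕ) : Ideal (CoordRing N) :=
  specialMaxIdeal (N + 4) (by omega)

lemma specialIdeal_eq_span : specialIdeal N = Ideal.span (Set.range
    fun q : Fin 2 × Fin (N + 4) => coord N q.1 q.2 - algebraMap ℂ _ (specialPair N q.1 q.2)) := by
  refine (Ideal.map_span _ _).trans (congrArg Ideal.span ?_)
  have hmk (q : Fin 2 × Fin (N + 4)) :
      mk N (X q - C (specialPoint (N + 4) (by omega) q)) =
        coord N q.1 q.2 - algebraMap ℂ _ (specialPair N q.1 q.2) := by
    rw [coord_val, ← specialPoint_eq_specialPair]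
    rfl
  ext y
  constructor
  · rintro ⟨_, ⟨q, rfl⟩, rfl⟩
    exact ⟨q, (hmk q).symm⟩
  · rintro ⟨q, rfl⟩
    exact ⟨_, ⟨q, rfl⟩, hmk q⟩

lemma ker_specialEval : RingHom.ker (specialEval N) = specialIdeal N := by
  rw [ker_eq_span_of_adjoin_eq_top _ (adjoin_coord_eq_top (f := .id ℂ _) Function.surjective_id),
    specialIdeal_eq_span]
  congr 1
  ext y
  constructor
  · rintro ⟨_, ⟨r, i, hi, rfl⟩, rfl⟩
    exact ⟨(r, ⟨i, by omega⟩), by simp [specialEval_coord r hi]⟩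
  · rintro ⟨q, rfl⟩
    exact ⟨_, ⟨q.1, q.2, by omega, rfl⟩, by simp [specialEval_coord q.1 (Fin.le_last q.2)]⟩

lemma mem_specialIdeal {y : CoordRing N} : y ∈ specialIdeal N ↔ specialEval N y = 0 := by
  rw [← ker_specialEval, RingHom.mem_ker]

instance : (specialIdeal N).IsMaximal :=
  ker_specialEval (N := N) ▸ RingHom.ker_isMaximal_of_surjective (specialEval N)
    fun c => ⟨algebraMap ℂ _ c, (specialEval N).commutes c⟩

lemma coord_one_mem_specialIdeal_sq {j : ℕ} (hj : 2 ≤ j) (hj' : j ≤ N + 1) :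
    coord N 1 j ∈ specialIdeal N ^ 2 := by
  set s : Fin 4 → ℕ := ![0, 1, N + 2, j] with hs
  have hlt : ∀ l, s l < N + 3 := by
    simpa [hs, Fin.forall_fin_succ] using (by omega : j < N + 3)
  have hmem {r : Fin 2} {i : ℕ} (hi : i ≤ N + 3) (h0 : specialPair N r i = 0) :
      coord N r i ∈ specialIdeal N :=
    mem_specialIdeal.2 ((specialEval_coord r hi).trans h0)
  refine mem_sq_of_det_eq_zero (det_derivMatrix_coord hlt) (i := 2) (j := 3) (fun l => ?_)
    (fun l => ?_) fun hminor => ?_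
  · exact hmem (hlt l).le (Pi.single_eq_of_ne (hlt l).ne 1)
  · have hl : (l : ℕ) % 2 ≤ 1 := by omega
    refine hmem (show j + (l : ℕ) % 2 ≤ N + 3 by omega) ?_
    fin_cases l <;> simp [hs, specialPair, Pi.single_apply] <;> omega
  · change (derivMatrix (coord N) (Fin.succAbove 2) (s ∘ Fin.succAbove 3)).det ∈ _ at hminor
    rw [mem_specialIdeal, map_det_derivMatrix,
      derivMatrix_congr (fun r i hi => specialEval_coord r hi) _ (s := s ∘ Fin.succAbove 3)
        fun l => hlt (Fin.succAbove 3 l),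
      Matrix.det_fin_three] at hminor
    simp [derivMatrix, specialPair, hs, Fin.succAbove, Pi.single_apply] at hminor

/-- The functions vanishing at the special point that serve there as local parameters: all the
coefficients of the first form and four of those of the second, up to constants. -/
noncomputable def specialParams (N : ℕ) : Fin (N + 4) ⊕ Fin 4 → CoordRing N :=
  (fun q : Fin 2 × ℕ => coord N q.1 q.2 - algebraMap ℂ _ (specialPair N q.1 q.2)) ∘
    Sum.elim (fun i => (0, i)) ![(1, 0), (1, 1), (1, N + 2), (1, N + 3)]

lemma specialParams_mem (o : Fin (N + 4) ⊕ Fin 4) : specialParams N o ∈ specialIdeal N := by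
  have hmem (r : Fin 2) {i : ℕ} (hi : i ≤ N + 3) :
      coord N r i - algebraMap ℂ _ (specialPair N r i) ∈ specialIdeal N := by
    rw [mem_specialIdeal, map_sub, specialEval_coord r hi, AlgHom.commutes]
    exact sub_self _
  rcases o with i | i
  · exact hmem 0 (Fin.le_last i)
  · fin_cases i
    exacts [hmem 1 (Nat.zero_le _), hmem 1 (Nat.le_add_left 1 _), hmem 1 (Nat.le_succ _),
      hmem 1 le_rfl]

lemma specialIdeal_le_span_specialParams :
    specialIdeal N ≤ Ideal.span (Set.range (specialParams N)) ⊔ specialIdeal N ^ 2 := by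
  have hparam (o : Fin (N + 4) ⊕ Fin 4) :
      specialParams N o ∈ Ideal.span (Set.range (specialParams N)) ⊔ specialIdeal N ^ 2 :=
    Ideal.mem_sup_left (Ideal.subset_span ⟨o, rfl⟩)
  rw (occs := [1]) [specialIdeal_eq_span]
  refine Ideal.span_le.2 ?_
  rintro _ ⟨⟨r, i, hi⟩, rfl⟩
  revert r
  refine Fin.forall_fin_two.2 ⟨hparam (.inl ⟨i, hi⟩), ?_⟩
  rcases (by omega : i = 0 ∨ i = 1 ∨ i = N + 2 ∨ i = N + 3 ∨ 2 ≤ i ∧ i ≤ N + 1) with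
    rfl | rfl | rfl | rfl | ⟨h2, hN⟩
  · exact hparam (.inr 0)
  · exact hparam (.inr 1)
  · exact hparam (.inr 2)
  · exact hparam (.inr 3)
  · have h0 : specialPair N 1 i = 0 := Pi.single_eq_of_ne (by omega) 1
    simp only [h0, map_zero, sub_zero]
    exact Ideal.mem_sup_right (coord_one_mem_specialIdeal_sq h2 hN)

lemma isRegLocalRing_localization_specialIdeal [(specialIdeal N).IsPrime] :
    IsRegLocalRing (Localization (specialIdeal N).primeCompl) := by
  refine isRegLocalRing_localization specialParams_mem specialIdeal_le_span_specialParams ?_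
  rw [ringKrullDim_localization]
  simp [add_assoc]

end CoordRing

end SpecialPoint

/-- For `d ≥ 4`, the determinantal variety `W'_d` of pairs `(f₁,f₂)` of binary forms of
degree `d-1` whose four partial derivatives are linearly dependent is Cohen–Macaulay,
reduced and normal of dimension `d+4`, and is smooth at the point
`((d-1)x^(d-2)y, y^(d-1))`. -/
theorem Wd_CM_reduced_normal (d : ℕ) (hd : 4 ≤ d) :
    (∀ (P : Ideal (MvPolynomial (Fin 2 × Fin d) ℂ ⧸ minorsIdeal d)), P.IsMaximal →
      ∀ [inst : P.IsPrime], IsCMLocalRing (Localization P.primeCompl))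
    ∧ IsReduced (MvPolynomial (Fin 2 × Fin d) ℂ ⧸ minorsIdeal d)
    ∧ IsDomain (MvPolynomial (Fin 2 × Fin d) ℂ ⧸ minorsIdeal d)
    ∧ IsIntegrallyClosed (MvPolynomial (Fin 2 × Fin d) ℂ ⧸ minorsIdeal d)
    ∧ ringKrullDim (MvPolynomial (Fin 2 × Fin d) ℂ ⧸ minorsIdeal d) = (d + 4 : ℕ)
    ∧ (specialMaxIdeal d hd).IsMaximal
    ∧ ∀ [inst : (specialMaxIdeal d hd).IsPrime],
        IsRegLocalRing (Localization (specialMaxIdeal d hd).primeCompl) := by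
  obtain ⟨N, rfl⟩ : ∃ N, d = N + 4 := ⟨d - 4, by omega⟩
  have hdim : ringKrullDim (CoordRing N) = (N + 4 + 4 : ℕ) := by
    rw [ringKrullDim_eq_card ℂ (Fin (N + 8)) (CoordRing N), Fintype.card_fin]
  refine ⟨fun (P : Ideal (CoordRing N)) (_ : P.IsMaximal) _ =>
      isCMLocalRing_localization ℂ (Fin (N + 8)) P,
    inferInstanceAs (IsReduced (CoordRing N)), inferInstanceAs (IsDomain (CoordRing N)),
    inferInstanceAs (IsIntegrallyClosed (CoordRing N)), hdim,
    inferInstanceAs (CoordRing.specialIdeal N).IsMaximal, ?_⟩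
  intro inst
  have : (CoordRing.specialIdeal N).IsPrime := inst
  exact CoordRing.isRegLocalRing_localization_specialIdeal
end
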